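/- Asymptotic stability of the linear evolutions: there exists an absolute constant C > 0 such that the following holds. Let J = [t₁,t₂], let u be a classical solution of ∂ₜₜu − Δu = −f(u) on J with energy E and a priori bound sup_{t∈J} ‖u(t,·)‖_{H̃²(ℝ³)} ≤ M. Let J' = [t₁', t₂'] ⊆ J and let t ∈ J \ J'. For i = 1,2 let vᵢ : ℝ × ℝ³ → ℝ be the smooth solution of the free wave equation ∂ₜₜvᵢ − Δvᵢ = 0 with vᵢ(tᵢ',·) = u(tᵢ',·) and ∂ₜvᵢ(tᵢ',·) = ∂ₜu(tᵢ',·). Then sup_{x∈ℝ³} |v₂(t,x) − v₁(t,x)| ≤ C·E^{5/6}·g(M)^{1/6} / dist(t, J')^{1/2}. -/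

import Mathlib

open MeasureTheory Set

noncomputable section

abbrev Space : Type := EuclideanSpace ℝ (Fin 3)

/-- The loglog weight `g(u) = (log log (10 + u²))^c`. -/
def g (c u : ℝ) : ℝ := Real.log (Real.log (10 + u ^ 2)) ^ c

/-- The nonlinearity `f(u) = u⁵ g(u)`. -/
def f (c u : ℝ) : ℝ := u ^ 5 * g c u

/-- The potential `F(u) = ∫₀ᵘ f(v) dv`. -/
def Fpot (c u : ℝ) : ℝ := ∫ v in (0:ℝ)..u, f c v

/-- First time derivative `∂ₜ u`. -/
def dt1 (u : ℝ → Space → ℝ) (t : ℝ) (x : Space) : ℝ := deriv (fun s => u s x) t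

/-- Second time derivative `∂ₜₜ u`. -/
def dt2 (u : ℝ → Space → ℝ) (t : ℝ) (x : Space) : ℝ := deriv (fun s => dt1 u s x) t

/-- The spatial Laplacian. -/
def lap (h : Space → ℝ) (x : Space) : ℝ :=
  ∑ i : Fin 3, fderiv ℝ (fun y => fderiv ℝ h y (EuclideanSpace.single i 1)) x
    (EuclideanSpace.single i 1)

/-- A classical solution of `∂ₜₜ u - Δ u = -f(u)` on the time interval `J`:
infinitely differentiable, compactly supported in space for each fixed time,
and satisfying the equation. -/
structure IsClassicalSol (c : ℝ) (J : Set ℝ) (u : ℝ → Space → ℝ) : Prop where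
  smooth : ContDiffOn ℝ (⊤ : ℕ∞) (fun p : ℝ × Space => u p.1 p.2) (J ×ˢ (Set.univ : Set Space))
  compactSpt : ∀ t ∈ J, HasCompactSupport (u t)
  eqn : ∀ t ∈ J, ∀ x : Space, dt2 u t x - lap (u t) x = - f c (u t x)

/-- The conserved energy. -/
def energy (c : ℝ) (u : ℝ → Space → ℝ) (t : ℝ) : ℝ :=
  (1/2) * (∫ x : Space, (dt1 u t x) ^ 2)
    + (1/2) * (∫ x : Space, ‖gradient (u t) x‖ ^ 2)
    + ∫ x : Space, Fpot c (u t x)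

/-- Spatial `L^r` norm. -/
def LxNorm (r : ℝ) (h : Space → ℝ) : ℝ := (∫ x : Space, |h x| ^ r) ^ (1 / r)

/-- Mixed norm `L^q_t L^r_x (J × ℝ³)`. -/
def LtLxNorm (q r : ℝ) (J : Set ℝ) (u : ℝ → Space → ℝ) : ℝ :=
  (∫ t in J, (LxNorm r (u t)) ^ q) ^ (1 / q)

/-- The homogeneous `H̃² = Ḣ² ∩ Ḣ¹` norm. -/
def H2tildeNorm (h : Space → ℝ) : ℝ :=
  (∫ x : Space, ‖iteratedFDeriv ℝ 2 h x‖ ^ 2) ^ ((1:ℝ)/2)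
    + (∫ x : Space, ‖gradient h x‖ ^ 2) ^ ((1:ℝ)/2)

/-- The inhomogeneous `H¹` norm. -/
def H1Norm (h : Space → ℝ) : ℝ :=
  (∫ x : Space, (h x) ^ 2) ^ ((1:ℝ)/2)
    + (∫ x : Space, ‖gradient h x‖ ^ 2) ^ ((1:ℝ)/2)

/-- Spatial `L^r` norm restricted to the interior of the light cone at time `t`,
i.e. the norm of `h · 1_{|x| < t}`. -/
def LxConeNorm (r t : ℝ) (h : Space → ℝ) : ℝ :=
  (∫ x in Metric.ball (0:Space) t, |h x| ^ r) ^ (1 / r)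

/-- Mixed norm `L^q_t L^r_x (Γ₊(J))` on the truncated forward light cone. -/
def LtLxConeNorm (q r : ℝ) (J : Set ℝ) (u : ℝ → Space → ℝ) : ℝ :=
  (∫ t in J, (LxConeNorm r t (u t)) ^ q) ^ (1 / q)

/-- The local energy `e(t)` (integral over the ball `|x| ≤ t`). -/
def locEnergy (c : ℝ) (u : ℝ → Space → ℝ) (t : ℝ) : ℝ :=
  (1/2) * (∫ x in Metric.closedBall (0:Space) t, (dt1 u t x) ^ 2)
    + (1/2) * (∫ x in Metric.closedBall (0:Space) t, ‖gradient (u t) x‖ ^ 2)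
    + ∫ x in Metric.closedBall (0:Space) t, Fpot c (u t x)

lemma param_hasDerivAt {α : Type*} [TopologicalSpace α] [T2Space α] [MeasurableSpace α]
    [OpensMeasurableSpace α] (μ : Measure α) [IsFiniteMeasureOnCompacts μ] {K : Set α}
    (hK : IsCompact K) (hKm : MeasurableSet K) {I : Set ℝ} (hI : IsOpen I) {k k' : ℝ → α → ℝ}
    (hk : ContinuousOn (Function.uncurry k) (I ×ˢ K))
    (hk' : ContinuousOn (Function.uncurry k') (I ×ˢ K))
    (hd : ∀ s ∈ I, ∀ z ∈ K, HasDerivAt (fun r => k r z) (k' s z) s) {s : ℝ} (hs : s ∈ I) :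
    HasDerivAt (fun r => ∫ z in K, k r z ∂μ) (∫ z in K, k' s z ∂μ) s := by
  obtain ⟨δ, hδ, hsub⟩ := Metric.isOpen_iff.1 hI s hs
  have hcb : Metric.closedBall s (δ/2) ⊆ I :=
    (Metric.closedBall_subset_ball (by linarith)).trans hsub
  have hcomp : IsCompact (Metric.closedBall s (δ/2) ×ˢ K) :=
    (isCompact_closedBall s (δ/2)).prod hK
  obtain ⟨B, hB⟩ := hcomp.exists_bound_of_continuousOn
    (hk'.mono (prod_mono hcb Subset.rfl))
  have slice : ∀ {q : ℝ → α → ℝ}, ContinuousOn (Function.uncurry q) (I ×ˢ K) → ∀ r ∈ I,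
      ContinuousOn (q r) K := by
    intro q hq r hr
    have : ContinuousOn (fun z : α => (r, z)) K := by fun_prop
    exact hq.comp this (fun z hz => ⟨hr, hz⟩)
  have hfin : μ K < ⊤ := hK.measure_lt_top
  have : IsFiniteMeasure (μ.restrict K) := ⟨by simpa using hfin⟩
  refine (hasDerivAt_integral_of_dominated_loc_of_deriv_le (μ := μ.restrict K)
    (F := k) (F' := k') (bound := fun _ => B) (Metric.closedBall_mem_nhds s (half_pos hδ))
    ?_ ?_ ?_ ?_ ?_ ?_).2
  · filter_upwards [hI.mem_nhds hs] with r hr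
    exact (slice hk r hr).aestronglyMeasurable_of_isCompact hK hKm
  · exact (slice hk s hs).integrableOn_compact hK
  · exact (slice hk' s hs).aestronglyMeasurable_of_isCompact hK hKm
  · filter_upwards [ae_restrict_mem hKm] with z hz r hr
    exact hB (r, z) ⟨hr, hz⟩
  · exact integrable_const _
  · filter_upwards [ae_restrict_mem hKm] with z hz r hr
    exact hd r (hcb hr) z hz

lemma param_continuousOn {α : Type*} [TopologicalSpace α] [T2Space α] [MeasurableSpace α]
    [OpensMeasurableSpace α] (μ : Measure α) [IsFiniteMeasureOnCompacts μ] {K : Set α}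
    (hK : IsCompact K) (hKm : MeasurableSet K) {J : Set ℝ} (hJ : IsCompact J) {k : ℝ → α → ℝ}
    (hk : ContinuousOn (Function.uncurry k) (J ×ˢ K)) :
    ContinuousOn (fun r => ∫ z in K, k r z ∂μ) J := by
  obtain ⟨B, hB⟩ := (hJ.prod hK).exists_bound_of_continuousOn hk
  have : IsFiniteMeasure (μ.restrict K) := ⟨by simpa using hK.measure_lt_top⟩
  refine continuousOn_of_dominated (bound := fun _ => B) ?_ ?_ ?_ ?_
  · intro r hr
    have : ContinuousOn (fun z : α => (r, z)) K := by fun_prop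
    exact (hk.comp this (fun z hz => ⟨hr, hz⟩)).aestronglyMeasurable_of_isCompact hK hKm
  · intro r hr
    filter_upwards [ae_restrict_mem hKm] with z hz
    exact hB (r, z) ⟨hr, hz⟩
  · exact integrable_const _
  · filter_upwards [ae_restrict_mem hKm] with z hz
    have : ContinuousOn (fun r : ℝ => (r, z)) J := by fun_prop
    exact hk.comp this (fun r hr => ⟨hr, hz⟩)

abbrev Sph : Type := Metric.sphere (0 : Space) 1

abbrev sg : Measure Sph := (volume : Measure Space).toSphere

lemma sph_integrable {k : Sph → ℝ} (hk : Continuous k) : Integrable k sg :=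
  hk.integrable_of_hasCompactSupport (HasCompactSupport.of_compactSpace k)

lemma sph_hasDerivAt {I : Set ℝ} (hI : IsOpen I) {k k' : ℝ → Sph → ℝ}
    (hk : ContinuousOn (Function.uncurry k) (I ×ˢ univ))
    (hk' : ContinuousOn (Function.uncurry k') (I ×ˢ univ))
    (hd : ∀ s ∈ I, ∀ z, HasDerivAt (fun r => k r z) (k' s z) s) {s : ℝ} (hs : s ∈ I) :
    HasDerivAt (fun r => ∫ z, k r z ∂sg) (∫ z, k' s z ∂sg) s := by
  have := param_hasDerivAt sg isCompact_univ MeasurableSet.univ hI hk hk'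
    (fun s hs z _ => hd s hs z) hs
  simpa only [Measure.restrict_univ] using this

lemma sph_continuousOn {J : Set ℝ} (hJ : IsCompact J) {k : ℝ → Sph → ℝ}
    (hk : ContinuousOn (Function.uncurry k) (J ×ˢ univ)) :
    ContinuousOn (fun r => ∫ z, k r z ∂sg) J := by
  have := param_continuousOn sg isCompact_univ MeasurableSet.univ hJ hk
  simpa only [Measure.restrict_univ] using this

def sphMap (L : Space ≃ₗᵢ[ℝ] Space) (w : Sph) : Sph :=
  ⟨L w, by simp⟩

lemma sphMap_continuous (L : Space ≃ₗᵢ[ℝ] Space) : Continuous (sphMap L) := by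
  unfold sphMap
  exact (L.continuous.comp continuous_subtype_val).subtype_mk _

open scoped Pointwise in
lemma sphMap_mp (L : Space ≃ₗᵢ[ℝ] Space) : MeasurePreserving (sphMap L) sg sg := by
  refine ⟨(sphMap_continuous L).measurable, ?_⟩
  ext s hs
  rw [Measure.map_apply (sphMap_continuous L).measurable hs,
    Measure.toSphere_apply' _ hs, Measure.toSphere_apply' _ ((sphMap_continuous L).measurable hs)]
  congr 1
  have hpre : (Ioo (0:ℝ) 1 • (Subtype.val '' (sphMap L ⁻¹' s)) : Set Space)
      = L ⁻¹' (Ioo (0:ℝ) 1 • (Subtype.val '' s)) := by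
    ext y
    simp only [Set.mem_smul, mem_preimage, mem_image, Subtype.exists]
    constructor
    · rintro ⟨r, hr, z, ⟨w, hw, hws, rfl⟩, rfl⟩
      exact ⟨r, hr, L w, ⟨L w, by simpa using hw, hws, rfl⟩, by simp⟩
    · rintro ⟨r, hr, z, ⟨w, hw, hws, rfl⟩, h⟩
      refine ⟨r, hr, L.symm w, ⟨L.symm w, by simpa using hw, ?_, rfl⟩, ?_⟩
      · simpa [sphMap] using hws
      · apply L.injective
        simpa using h
  rw [hpre]
  exact (L.measurePreserving.measure_preimage_equiv (f := L.toHomeomorph.toMeasurableEquiv) _)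

lemma sph_integral_map (L : Space ≃ₗᵢ[ℝ] Space) (k : Space → ℝ) (hk : Continuous k) :
    ∫ w : Sph, k (L w) ∂sg = ∫ w : Sph, k w ∂sg := by
  have h := (sphMap_mp L).map_eq
  conv_rhs => rw [← h]
  rw [integral_map (sphMap_continuous L).aemeasurable]
  · rfl
  · exact (hk.comp continuous_subtype_val).aestronglyMeasurable

abbrev ee (i : Fin 3) : Space := EuclideanSpace.single i (1:ℝ)

def genA (i j : Fin 3) : Space →ₗ[ℝ] Space where
  toFun y := y i • ee j - y j • ee i
  map_add' x y := by ext k; simp; split_ifs <;> ring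
  map_smul' c y := by ext k; simp [-mul_eq_mul_left_iff]; try (split_ifs <;> ring)

def genP (i j : Fin 3) : Space →ₗ[ℝ] Space where
  toFun y := y i • ee i + y j • ee j
  map_add' x y := by ext k; simp; split_ifs <;> ring
  map_smul' c y := by ext k; simp [-mul_eq_mul_left_iff]; try (split_ifs <;> ring)

def rotL (i j : Fin 3) (hij : i ≠ j) (θ : ℝ) : Space →ₗᵢ[ℝ] Space where
  toLinearMap := LinearMap.id + (Real.cos θ - 1) • genP i j + Real.sin θ • genA i j
  norm_map' y := by
    have h := Real.sin_sq_add_cos_sq θ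
    rw [EuclideanSpace.norm_eq, EuclideanSpace.norm_eq]
    congr 1
    simp only [Real.norm_eq_abs, sq_abs, Fin.sum_univ_three]
    fin_cases i <;> fin_cases j <;> simp [genA, genP] at hij ⊢ <;>
      (generalize Real.sin θ = a at *; generalize Real.cos θ = b at *; grind)

lemma rot_zero (i j : Fin 3) (k : Space → ℝ) (hk : ContDiff ℝ 1 k) :
    ∫ w : Sph, fderiv ℝ k w (genA i j w) ∂sg = 0 := by
  by_cases hij : i = j
  · subst hij
    simp [genA]
  have hc : Continuous (genA i j) := (genA i j).continuous_of_finiteDimensional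
  have hp : Continuous (genP i j) := (genP i j).continuous_of_finiteDimensional
  have hk1 : Continuous (fderiv ℝ k) := hk.continuous_fderiv (by simp)
  have hconst : ∀ θ, ∫ w : Sph, k ((w : Space) + (Real.cos θ - 1) • genP i j w
      + Real.sin θ • genA i j w) ∂sg = ∫ w : Sph, k w ∂sg := by
    intro θ
    exact sph_integral_map ((rotL i j hij θ).toLinearIsometryEquiv rfl) k hk.continuous
  have hd : HasDerivAt (fun θ => ∫ w : Sph, k ((w : Space) + (Real.cos θ - 1) • genP i j w
      + Real.sin θ • genA i j w) ∂sg)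
      (∫ w : Sph, fderiv ℝ k ((w : Space) + (Real.cos 0 - 1) • genP i j w
      + Real.sin 0 • genA i j w) ((- Real.sin 0) • genP i j w + Real.cos 0 • genA i j w) ∂sg) 0 := by
    refine sph_hasDerivAt (I := univ)
      (k := fun θ w => k ((w : Space) + (Real.cos θ - 1) • genP i j w
      + Real.sin θ • genA i j w))
      (k' := fun θ w => fderiv ℝ k ((w : Space) + (Real.cos θ - 1) • genP i j w
      + Real.sin θ • genA i j w) ((- Real.sin θ) • genP i j w + Real.cos θ • genA i j w))
      isOpen_univ ?_ ?_ ?_ (mem_univ _)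
    · apply Continuous.continuousOn
      have := hk.continuous
      unfold Function.uncurry
      fun_prop
    · apply Continuous.continuousOn
      unfold Function.uncurry
      fun_prop
    · intro θ _ w
      have h1 : HasDerivAt (fun θ => (w : Space) + (Real.cos θ - 1) • genP i j w
          + Real.sin θ • genA i j w)
          ((- Real.sin θ) • genP i j w + Real.cos θ • genA i j w) θ := by
        have a := (((Real.hasDerivAt_cos θ).sub_const 1).smul_const (genP i j w)).const_add (w:Space)
        exact a.add ((Real.hasDerivAt_sin θ).smul_const (genA i j w))
      exact ((hk.differentiable (by simp)) _).hasFDerivAt.comp_hasDerivAt θ h1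
  have h0 := hd.unique ((hasDerivAt_const (0:ℝ) (∫ w : Sph, k w ∂sg)).congr_of_eventuallyEq
    (Filter.Eventually.of_forall hconst))
  simpa using h0

lemma finrank_Space : Module.finrank ℝ Space = 3 := by simp

lemma polar_aux {k : Space → ℝ} (hk : Integrable k) :
    Integrable (fun p : Sph × Ioi (0:ℝ) => k ((p.2:ℝ) • (p.1:Space)))
      (sg.prod (Measure.volumeIoiPow 2)) ∧
    ∫ x, k x = ∫ p : Sph × Ioi (0:ℝ), k ((p.2:ℝ) • (p.1:Space))
      ∂(sg.prod (Measure.volumeIoiPow 2)) := by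
  have hmp := (volume : Measure Space).measurePreserving_homeomorphUnitSphereProd
  rw [finrank_Space] at hmp
  have hemb := (homeomorphUnitSphereProd Space).measurableEmbedding
  have hcomp : ∀ x : ({(0)}ᶜ : Set Space), k x = (fun p : Sph × Ioi (0:ℝ) =>
      k ((p.2:ℝ) • (p.1:Space))) (homeomorphUnitSphereProd Space x) := by
    intro x
    have := homeomorphUnitSphereProd_symm_apply_coe Space (homeomorphUnitSphereProd Space x)
    rw [Homeomorph.symm_apply_apply] at this
    simp only
    rw [← this]
  constructor
  · have h1 : Integrable (fun x : ({(0)}ᶜ : Set Space) => k x)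
        (Measure.comap Subtype.val volume) := by
      have := (integrableOn_iff_comap_subtypeVal (μ := (volume : Measure Space)) (f := k)
        (measurableSet_singleton (0:Space)).compl).1 hk.integrableOn
      exact this
    refine (hmp.integrable_comp_emb hemb).1 ?_
    refine h1.congr (Filter.Eventually.of_forall hcomp)
  · have h1 : ∫ x, k x = ∫ x : ({(0)}ᶜ : Set Space), k x ∂(Measure.comap Subtype.val volume) := by
      rw [integral_subtype_comap (measurableSet_singleton _).compl k,
        restrict_compl_singleton]
    rw [h1, integral_congr_ae (Filter.Eventually.of_forall hcomp)]
    exact hmp.integral_comp hemb (fun p : Sph × Ioi (0:ℝ) => k ((p.2:ℝ) • (p.1:Space)))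

lemma ioiPow_integral (q : ℝ → ℝ) :
    ∫ r : Ioi (0:ℝ), q r ∂(Measure.volumeIoiPow 2) = ∫ r in Ioi (0:ℝ), r ^ 2 * q r := by
  simp only [Measure.volumeIoiPow, ENNReal.ofReal]
  rw [integral_withDensity_eq_integral_smul,
    integral_subtype_comap measurableSet_Ioi fun a ↦ Real.toNNReal (a ^ 2) • q a,
    setIntegral_congr_fun measurableSet_Ioi fun x hx ↦ ?_]
  · rw [NNReal.smul_def, Real.coe_toNNReal _ (pow_nonneg hx.out.le _)]; rfl
  · exact (measurable_subtype_coe.pow_const _).real_toNNReal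

lemma polar1 {k : Space → ℝ} (hk : Integrable k) :
    Integrable (fun w : Sph => ∫ r in Ioi (0:ℝ), r ^ 2 * k (r • (w:Space))) sg ∧
    ∫ x, k x = ∫ w : Sph, (∫ r in Ioi (0:ℝ), r ^ 2 * k (r • (w:Space))) ∂sg := by
  obtain ⟨h1, h2⟩ := polar_aux hk
  have e : ∀ w : Sph, ∫ r : Ioi (0:ℝ), k ((r:ℝ) • (w:Space)) ∂(Measure.volumeIoiPow 2)
    = ∫ r in Ioi (0:ℝ), r ^ 2 * k (r • (w:Space)) :=
    fun w => ioiPow_integral (fun r => k (r • (w:Space)))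
  constructor
  · have := h1.integral_prod_left
    simpa only [e] using this
  · rw [h2, integral_prod _ h1]
    simp only [e]

lemma polar2 {k : Space → ℝ} (hk : Integrable k) :
    ∫ x, k x = ∫ r in Ioi (0:ℝ), r ^ 2 * ∫ w : Sph, k (r • (w:Space)) ∂sg := by
  obtain ⟨h1, h2⟩ := polar_aux hk
  rw [h2, integral_prod_symm _ h1]
  exact ioiPow_integral (fun r => ∫ w : Sph, k (r • (w:Space)) ∂sg)

lemma polar_ball {k : Space → ℝ} (hk : Continuous k) :
    ∫ x in Metric.closedBall (0:Space) 1, k x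
      = ∫ r in (0:ℝ)..1, r ^ 2 * ∫ w : Sph, k (r • (w:Space)) ∂sg := by
  rw [← integral_indicator measurableSet_closedBall, polar2]
  · rw [intervalIntegral.integral_of_le zero_le_one,
      ← integral_indicator measurableSet_Ioi, ← integral_indicator measurableSet_Ioc]
    congr 1
    ext r
    by_cases hr : r ∈ Ioi (0:ℝ)
    · rw [indicator_of_mem hr]
      by_cases hr1 : r ≤ 1
      · rw [indicator_of_mem (show r ∈ Ioc (0:ℝ) 1 from ⟨hr, hr1⟩)]
        congr 2
        ext w
        rw [indicator_of_mem]
        simp [norm_smul, abs_of_pos hr.out, hr1]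
      · rw [indicator_of_notMem (show r ∉ Ioc (0:ℝ) 1 from fun h => hr1 h.2)]
        have : ∀ w : Sph, (Metric.closedBall (0:Space) 1).indicator k (r • (w:Space)) = 0 := by
          intro w
          rw [indicator_of_notMem]
          simpa [norm_smul, abs_of_pos hr.out] using hr1
        simp [this]
    · rw [indicator_of_notMem hr, indicator_of_notMem (fun h => hr h.1)]
  · rw [integrable_indicator_iff measurableSet_closedBall]
    exact hk.continuousOn.integrableOn_compact (isCompact_closedBall _ _)

/-- partial derivative -/
def pd (i : Fin 3) (k : Space → ℝ) (y : Space) : ℝ := fderiv ℝ k y (ee i)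

lemma sph_sum (w : Sph) : (w:Space) 0 ^ 2 + (w:Space) 1 ^ 2 + (w:Space) 2 ^ 2 = 1 := by
  have h : ‖(w:Space)‖ = 1 := by simp
  have h2 := EuclideanSpace.norm_sq_eq (w:Space)
  rw [h] at h2
  simp only [Real.norm_eq_abs, sq_abs, Fin.sum_univ_three] at h2
  linarith

lemma fderiv_coord (i : Fin 3) (y v : Space) : fderiv ℝ (fun z : Space => z i) y v = v i := by
  have : HasFDerivAt (fun z : Space => z i) (EuclideanSpace.proj i : Space →L[ℝ] ℝ) y :=
    (EuclideanSpace.proj i : Space →L[ℝ] ℝ).hasFDerivAt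
  rw [this.fderiv]; rfl

lemma tang_aux (i j : Fin 3) (hij : i ≠ j) (X : Fin 3 → Space → ℝ) (hX : ∀ i, ContDiff ℝ 1 (X i))
    (y : Space) :
    fderiv ℝ (fun z => z i * X j z - z j * X i z) y (genA i j y)
     = y i ^ 2 * pd j (X j) y - y i * X i y - y i * y j * pd j (X i) y - y j * X j y
       - y i * y j * pd i (X j) y + y j ^ 2 * pd i (X i) y := by
  have hd : ∀ i, DifferentiableAt ℝ (X i) y := fun i => (hX i).differentiable (by simp) y
  have hc : ∀ i, DifferentiableAt ℝ (fun z : Space => z i) y := fun i =>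
    (EuclideanSpace.proj i : Space →L[ℝ] ℝ).differentiableAt
  have e : ∀ i, DifferentiableAt ℝ (fun z : Space => z i * X j z) y := fun i => (hc i).mul (hd j)
  have e' : ∀ j, DifferentiableAt ℝ (fun z : Space => z j * X i z) y := fun j => (hc j).mul (hd i)
  rw [fderiv_fun_sub (e i) (e' j), fderiv_fun_mul (hc i) (hd j), fderiv_fun_mul (hc j) (hd i)]
  have a1 : ∀ l, fderiv ℝ (X l) y (genA i j y) = y i * pd j (X l) y - y j * pd i (X l) y := by
    intro l
    simp [genA, pd]
  simp only [sub_apply, add_apply, smul_apply, fderiv_coord, a1, smul_eq_mul]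
  simp [genA, hij, hij.symm]
  ring

lemma pd_continuous {k : Space → ℝ} (hk : ContDiff ℝ 1 k) (i : Fin 3) : Continuous (pd i k) := by
  have := hk.continuous_fderiv (by simp)
  unfold pd
  fun_prop

lemma tang_div (X : Fin 3 → Space → ℝ) (hX : ∀ i, ContDiff ℝ 1 (X i)) :
    ∫ w : Sph, ((∑ j, pd j (X j) w) - (∑ i, fderiv ℝ (X i) w w * (w:Space) i)
      - 2 * ∑ i, (w:Space) i * X i w) ∂sg = 0 := by
  have hc : ∀ i, ContDiff ℝ 1 (fun z : Space => z i) := fun i =>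
    (EuclideanSpace.proj i : Space →L[ℝ] ℝ).contDiff
  have key : ∀ i j, ∫ w : Sph, fderiv ℝ (fun z => z i * X j z - z j * X i z) w (genA i j w) ∂sg = 0 :=
    fun i j => rot_zero i j _ (((hc i).mul (hX j)).sub ((hc j).mul (hX i)))
  have hint : ∀ i j, Integrable (fun w : Sph =>
      fderiv ℝ (fun z => z i * X j z - z j * X i z) w (genA i j w)) sg := by
    intro i j
    apply sph_integrable
    have h1 := (((hc i).mul (hX j)).sub ((hc j).mul (hX i))).continuous_fderiv (by simp)
    have h2 : Continuous (genA i j) := (genA i j).continuous_of_finiteDimensional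
    have h3 : Continuous (fun w : Sph => (w : Space)) := continuous_subtype_val
    exact (h1.comp h3).clm_apply (h2.comp h3)
  have : (fun w : Sph => ((∑ j, pd j (X j) w) - (∑ i, fderiv ℝ (X i) w w * (w:Space) i)
      - 2 * ∑ i, (w:Space) i * X i w)) = fun w : Sph =>
      fderiv ℝ (fun z => z 0 * X 1 z - z 1 * X 0 z) w (genA 0 1 w)
      + fderiv ℝ (fun z => z 0 * X 2 z - z 2 * X 0 z) w (genA 0 2 w)
      + fderiv ℝ (fun z => z 1 * X 2 z - z 2 * X 1 z) w (genA 1 2 w) := by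
    ext w
    rw [tang_aux 0 1 (by decide) X hX, tang_aux 0 2 (by decide) X hX, tang_aux 1 2 (by decide) X hX]
    have hw := sph_sum w
    have hexp : ∀ i, fderiv ℝ (X i) w w = (w:Space) 0 * pd 0 (X i) w + (w:Space) 1 * pd 1 (X i) w
        + (w:Space) 2 * pd 2 (X i) w := by
      intro i
      have hb : (w:Space) = (w:Space) 0 • ee 0 + (w:Space) 1 • ee 1 + (w:Space) 2 • ee 2 := by
        ext l; fin_cases l <;> simp
      conv_lhs => rw [show ∀ L : Space →L[ℝ] ℝ, L w = L ((w:Space) 0 • ee 0 + (w:Space) 1 • ee 1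
        + (w:Space) 2 • ee 2) from fun L => by rw [← hb]]
      simp [pd]
    simp only [Fin.sum_univ_three, hexp]
    linear_combination (- (pd 0 (X 0) w + pd 1 (X 1) w + pd 2 (X 2) w)) * hw
  have h12 := (hint 0 1).add (hint 0 2)
  simp only [Pi.add_def] at h12
  rw [this, integral_add h12 (hint 1 2), integral_add (hint 0 1) (hint 0 2), key, key, key]
  simp

lemma tang_div_r (X : Fin 3 → Space → ℝ) (hX : ∀ i, ContDiff ℝ 1 (X i)) (x : Space) (r : ℝ) :
    ∫ w : Sph, (r ^ 2 * (∑ j, pd j (X j) (x + r • (w:Space)))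
      - r ^ 2 * (∑ i, fderiv ℝ (X i) (x + r • (w:Space)) w * (w:Space) i)
      - 2 * r * ∑ i, (w:Space) i * X i (x + r • (w:Space))) ∂sg = 0 := by
  have hY : ∀ i, ContDiff ℝ 1 (fun z => X i (x + r • z)) := fun i => (hX i).comp (by fun_prop)
  have h := tang_div (fun i z => X i (x + r • z)) hY
  have hfd : ∀ i (z v : Space), fderiv ℝ (fun z => X i (x + r • z)) z v
      = r * fderiv ℝ (X i) (x + r • z) v := by
    intro i z v
    have h1 : HasFDerivAt (fun z : Space => x + r • z) (r • ContinuousLinearMap.id ℝ Space) z :=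
      ((hasFDerivAt_id z).const_smul r).const_add x
    have h2 := (((hX i).differentiable (by simp)) (x + r • z)).hasFDerivAt.comp z h1
    have h3 := h2.fderiv
    simp only [Function.comp_def] at h3
    rw [h3]
    simp
  simp only [pd, hfd] at h ⊢
  rw [← mul_zero r, ← h, ← integral_const_mul]
  congr 1
  ext w
  simp only [Fin.sum_univ_three]
  ring

lemma divergence_ball (X : Fin 3 → Space → ℝ) (hX : ∀ i, ContDiff ℝ 1 (X i)) :
    ∫ z in Metric.closedBall (0:Space) 1, (∑ j, pd j (X j) z)
      = ∫ w : Sph, (∑ i, (w:Space) i * X i w) ∂sg := by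
  have hpc : ∀ i j, Continuous (pd i (X j)) := fun i j => pd_continuous (hX j) i
  have hXc : ∀ i, Continuous (X i) := fun i => (hX i).continuous
  have hfc : ∀ i, Continuous (fderiv ℝ (X i)) := fun i => (hX i).continuous_fderiv (by simp)
  rw [polar_ball (by fun_prop)]
  set G : ℝ → ℝ := fun r => ∫ w : Sph, r ^ 2 * (∑ i, (w:Space) i * X i (r • (w:Space))) ∂sg with hG
  have hcs : Continuous (fun w : Sph => (w:Space)) := continuous_subtype_val
  have hd : ∀ r, HasDerivAt G (∫ w : Sph, (2 * r * (∑ i, (w:Space) i * X i (r • (w:Space)))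
      + r ^ 2 * ∑ i, (w:Space) i * fderiv ℝ (X i) (r • (w:Space)) w) ∂sg) r := by
    intro r
    refine sph_hasDerivAt (I := univ)
      (k := fun r w => r ^ 2 * (∑ i, (w:Space) i * X i (r • (w:Space))))
      (k' := fun r w => (2 * r * (∑ i, (w:Space) i * X i (r • (w:Space)))
      + r ^ 2 * ∑ i, (w:Space) i * fderiv ℝ (X i) (r • (w:Space)) w))
      isOpen_univ ?_ ?_ ?_ (mem_univ _)
    · apply Continuous.continuousOn
      unfold Function.uncurry
      fun_prop
    · apply Continuous.continuousOn
      unfold Function.uncurry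
      fun_prop
    · intro r _ w
      have h1 : HasDerivAt (fun r : ℝ => r • (w:Space)) (w:Space) r := by
        simpa using (hasDerivAt_id r).smul_const (w:Space)
      have h2 : ∀ i, HasDerivAt (fun r : ℝ => (w:Space) i * X i (r • (w:Space)))
          ((w:Space) i * fderiv ℝ (X i) (r • (w:Space)) w) r := fun i =>
        ((((hX i).differentiable (by simp)) _).hasFDerivAt.comp_hasDerivAt r h1).const_mul _
      have h3 := HasDerivAt.fun_sum (u := Finset.univ) (fun i _ => h2 i)
      have h4 := (hasDerivAt_pow 2 r).fun_mul h3
      exact h4.congr_deriv (by norm_num)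
  have hd' : ∀ r, HasDerivAt G (r ^ 2 * ∫ w : Sph, (∑ j, pd j (X j) (r • (w:Space))) ∂sg) r := by
    intro r
    convert hd r using 1
    have h := tang_div_r X hX 0 r
    simp only [zero_add] at h
    rw [← integral_const_mul, ← sub_eq_zero, ← integral_sub]
    · rw [← h]
      congr 1
      ext w
      simp only [Fin.sum_univ_three]
      ring
    · apply sph_integrable
      fun_prop
    · apply sph_integrable
      fun_prop
  have hft := intervalIntegral.integral_eq_sub_of_hasDerivAt (a := 0) (b := 1)
    (fun r _ => hd' r) ?_
  · rw [hft]
    simp [hG]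
  · apply ContinuousOn.intervalIntegrable
    apply ContinuousOn.mul (by fun_prop)
    refine sph_continuousOn (k := fun r w => ∑ j, pd j (X j) (r • (w:Space))) isCompact_uIcc ?_
    apply Continuous.continuousOn
    unfold Function.uncurry
    fun_prop

abbrev TX : Type := ℝ × Space

structure Sm (I : Set ℝ) (U : TX → ℝ) (D : TX → (TX →L[ℝ] ℝ))
    (D2 : TX → (TX →L[ℝ] (TX →L[ℝ] ℝ))) : Prop where
  op : IsOpen I
  hU : ∀ s ∈ I, ∀ y, HasFDerivAt U (D (s, y)) (s, y)
  hD : ∀ s ∈ I, ∀ y, HasFDerivAt D (D2 (s, y)) (s, y)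
  cU : ContDiffOn ℝ 1 U (I ×ˢ univ)
  cD : ContDiffOn ℝ 1 D (I ×ˢ univ)
  cD2 : ContinuousOn D2 (I ×ˢ univ)
  sym : ∀ s ∈ I, ∀ y v w, D2 (s, y) v w = D2 (s, y) w v

abbrev et : TX := (1, 0)
abbrev ex (v : Space) : TX := (0, v)

lemma ex_sum (v : Space) : ex v = v 0 • ex (ee 0) + v 1 • ex (ee 1) + v 2 • ex (ee 2) := by
  have hb : v = v 0 • ee 0 + v 1 • ee 1 + v 2 • ee 2 := by
    ext l; fin_cases l <;> simp
  ext1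
  · simp
  · simpa using hb

lemma clm_ex (L : TX →L[ℝ] ℝ) (v : Space) :
    L (ex v) = v 0 * L (ex (ee 0)) + v 1 * L (ex (ee 1)) + v 2 * L (ex (ee 2)) := by
  rw [ex_sum v]; simp only [map_add, map_smul, smul_eq_mul]

lemma et_sub (w : Space) : ((1:ℝ), -w) = et - ex w := by
  ext1 <;> simp

def lapD (D2 : TX → (TX →L[ℝ] (TX →L[ℝ] ℝ))) (p : TX) : ℝ :=
  ∑ i, D2 p (ex (ee i)) (ex (ee i))

def box (D2 : TX → (TX →L[ℝ] (TX →L[ℝ] ℝ))) (p : TX) : ℝ :=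
  D2 p et et - lapD D2 p

def phi (U : TX → ℝ) (D : TX → (TX →L[ℝ] ℝ)) (t : ℝ) (x : Space) (s : ℝ) : ℝ :=
  ∫ w : Sph, (U (s, x + (t - s) • (w:Space)) + (t - s) * (D (s, x + (t - s) • (w:Space)) (ex w)
    + D (s, x + (t - s) • (w:Space)) et)) ∂sg

lemma path_deriv (t : ℝ) (x w : Space) (s : ℝ) :
    HasDerivAt (fun s : ℝ => ((s, x + (t - s) • w) : TX)) (et - ex w) s := by
  rw [← et_sub]
  have h1 : HasDerivAt (fun s : ℝ => x + (t - s) • w) (-w) s := by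
    have := (((hasDerivAt_id s).const_sub t).smul_const w).const_add x
    simpa using this
  exact (hasDerivAt_id s).prodMk h1

lemma path_contOn {α : Type*} [TopologicalSpace α] (ι : α → Space) (hι : Continuous ι)
    {J : Set ℝ} (t : ℝ) (x : Space) {K : Set α} {Y : Type*} [TopologicalSpace Y] {q : TX → Y}
    (hq : ContinuousOn q (J ×ˢ univ)) :
    ContinuousOn (fun p : ℝ × α => q (p.1, x + (t - p.1) • ι p.2)) (J ×ˢ K) := by
  refine hq.comp ?_ (fun p hp => ⟨hp.1, mem_univ _⟩)
  apply Continuous.continuousOn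
  fun_prop

lemma phi_hasDerivAt {I : Set ℝ} {U D D2} (h : Sm I U D D2) (t : ℝ) (x : Space) {s : ℝ}
    (hs : s ∈ I) (hst : s ≠ t) :
    HasDerivAt (phi U D t x) ((t - s) * ∫ w : Sph, box D2 (s, x + (t - s) • (w:Space)) ∂sg) s := by
  have hcs : Continuous (fun w : Sph => (w:Space)) := continuous_subtype_val
  have cU := path_contOn _ hcs t x (K := univ) h.cU.continuousOn
  have cD := path_contOn _ hcs t x (K := univ) h.cD.continuousOn
  have cD2 := path_contOn _ hcs t x (K := univ) h.cD2
  have cex : Continuous (fun p : ℝ × Sph => ex (p.2 : Space)) := by unfold ex; fun_prop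
  have cDe : ContinuousOn (fun p : ℝ × Sph => D (p.1, x + (t - p.1) • (p.2:Space)) (ex p.2))
    (I ×ˢ univ) := cD.clm_apply cex.continuousOn
  have cDt : ContinuousOn (fun p : ℝ × Sph => D (p.1, x + (t - p.1) • (p.2:Space)) et)
    (I ×ˢ univ) := cD.clm_apply continuousOn_const
  have cD2e : ContinuousOn (fun p : ℝ × Sph => D2 (p.1, x + (t - p.1) • (p.2:Space)) (ex p.2) (ex p.2))
    (I ×ˢ univ) := (cD2.clm_apply cex.continuousOn).clm_apply cex.continuousOn
  have cD2c : ∀ a b : TX, ContinuousOn (fun p : ℝ × Sph => D2 (p.1, x + (t - p.1) • (p.2:Space)) a b)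
    (I ×ˢ univ) := fun a b => (cD2.clm_apply continuousOn_const).clm_apply continuousOn_const
  have main : HasDerivAt (phi U D t x)
      (∫ w : Sph, (-2 * D (s, x + (t - s) • (w:Space)) (ex w)
        + (t - s) * (D2 (s, x + (t - s) • (w:Space)) et et
          - D2 (s, x + (t - s) • (w:Space)) (ex w) (ex w))) ∂sg) s := by
    refine sph_hasDerivAt (I := I)
      (k := fun s w => (U (s, x + (t - s) • (w:Space)) + (t - s) * (D (s, x + (t - s) • (w:Space)) (ex w)
        + D (s, x + (t - s) • (w:Space)) et)))
      (k' := fun s w => (-2 * D (s, x + (t - s) • (w:Space)) (ex w)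
        + (t - s) * (D2 (s, x + (t - s) • (w:Space)) et et
          - D2 (s, x + (t - s) • (w:Space)) (ex w) (ex w))))
      h.op ?_ ?_ ?_ hs
    · exact cU.add ((by fun_prop : Continuous (fun p : ℝ × Sph => t - p.1)).continuousOn.mul
        (cDe.add cDt))
    · exact (continuousOn_const.mul cDe).add
        ((by fun_prop : Continuous (fun p : ℝ × Sph => t - p.1)).continuousOn.mul
        ((cD2c et et).sub cD2e))
    · intro s hs w
      have hp := path_deriv t x w s
      have h1 := (h.hU s hs (x + (t - s) • (w:Space))).comp_hasDerivAt s hp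
      have h2 := (h.hD s hs (x + (t - s) • (w:Space))).comp_hasDerivAt s hp
      have h3 := (h2.clm_apply (hasDerivAt_const s (ex w))).add (h2.clm_apply (hasDerivAt_const s et))
      have h4 := h1.add (((hasDerivAt_id s).const_sub t).mul h3)
      refine h4.congr_deriv ?_
      have hsym := h.sym s hs (x + (t - s) • (w:Space)) et (ex w)
      simp only [map_sub, sub_apply, add_apply, Function.comp, map_zero, id,
        ContinuousLinearMap.comp_apply, ContinuousLinearMap.flip_apply, Pi.add_apply]
      simp only [hsym]
      ring
  refine main.congr_deriv ?_
  set r := t - s with hr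
  have hr0 : r ≠ 0 := sub_ne_zero.2 (Ne.symm hst)
  -- slices
  have sl : ∀ {q : ℝ × Sph → ℝ}, ContinuousOn q (I ×ˢ univ) →
      Continuous (fun w : Sph => q (s, w)) := by
    intro q hq
    rw [← continuousOn_univ]
    exact hq.comp (by fun_prop : Continuous (fun w : Sph => (s, w))).continuousOn
      (fun w hw => ⟨hs, hw⟩)
  have i1 := sph_integrable (sl cDe)
  have i2 := sph_integrable (sl cD2e)
  have i3 := fun a b => sph_integrable (sl (cD2c a b))
  simp only [← hr] at i1 i2 i3
  have hX : ∀ i, ContDiff ℝ 1 (fun y : Space => D (s, y) (ex (ee i))) := by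
    intro i
    have : ContDiff ℝ 1 (fun y : Space => D (s, y)) :=
      h.cD.comp_contDiff (f := fun y : Space => (s, y)) (by fun_prop) (fun y => ⟨hs, mem_univ _⟩)
    exact this.clm_apply contDiff_const
  have hfd : ∀ i y v, fderiv ℝ (fun y : Space => D (s, y) (ex (ee i))) y v
      = D2 (s, y) (ex v) (ex (ee i)) := by
    intro i y v
    have h1 : HasFDerivAt (fun y : Space => ((s, y) : TX)) (ContinuousLinearMap.inr ℝ ℝ Space) y :=
      hasFDerivAt_prodMk_right s y
    have h2 := ((h.hD s hs y).comp y h1).clm_apply (hasFDerivAt_const (ex (ee i)) y)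
    have h3 := h2.fderiv
    simp only [Function.comp_def] at h3
    rw [h3]
    simp
  have T := tang_div_r (fun i y => D (s, y) (ex (ee i))) hX x r
  simp only [pd, hfd] at T
  have T' : ∫ w : Sph, (r * lapD D2 (s, x + r • (w:Space))
      - r * D2 (s, x + r • (w:Space)) (ex w) (ex w)
      - 2 * D (s, x + r • (w:Space)) (ex w)) ∂sg = 0 := by
    have : r * ∫ w : Sph, (r * lapD D2 (s, x + r • (w:Space))
      - r * D2 (s, x + r • (w:Space)) (ex w) (ex w)
      - 2 * D (s, x + r • (w:Space)) (ex w)) ∂sg = 0 := by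
      rw [← T, ← integral_const_mul]
      congr 1
      ext w
      rw [clm_ex (D (s, x + r • (w:Space))) w, clm_ex (D2 (s, x + r • (w:Space)) (ex w)) w]
      simp only [Fin.sum_univ_three, lapD]
      ring
    exact (mul_eq_zero.1 this).resolve_left hr0
  have il : Integrable (fun w : Sph => lapD D2 (s, x + r • (w:Space))) sg := by
    unfold lapD
    exact integrable_finsetSum _ (fun i _ => i3 _ _)
  rw [← integral_const_mul, ← sub_eq_zero, ← integral_sub]
  · rw [← T']
    congr 1
    ext w
    simp only [box]
    ring
  · exact (i1.const_mul _).add (((i3 _ _).sub i2).const_mul _)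
  · exact ((i3 _ _).sub il).const_mul _

/-- energy density -/
def edens (F : ℝ → ℝ) (U : TX → ℝ) (D : TX → (TX →L[ℝ] ℝ)) (p : TX) : ℝ :=
  (1/2) * (D p et) ^ 2 + (1/2) * (∑ i, (D p (ex (ee i))) ^ 2) + F (U p)

def En (F : ℝ → ℝ) (U : TX → ℝ) (D : TX → (TX →L[ℝ] ℝ)) (t : ℝ) (x : Space) (s : ℝ) : ℝ :=
  ∫ z in Metric.closedBall (0:Space) 1, (t - s) ^ 3 * edens F U D (s, x + (t - s) • z)

/-- derivative of the energy density -/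
def dedens (f : ℝ → ℝ) (U : TX → ℝ) (D : TX → (TX →L[ℝ] ℝ))
    (D2 : TX → (TX →L[ℝ] (TX →L[ℝ] ℝ))) (p : TX) (v : TX) : ℝ :=
  D p et * D2 p v et + (∑ i, D p (ex (ee i)) * D2 p v (ex (ee i))) + f (U p) * D p v

lemma dir_dedens {I : Set ℝ} {U D D2} (h : Sm I U D D2) {F f : ℝ → ℝ}
    (hF : ∀ v, HasDerivAt F (f v) v) {γ : ℝ → TX} {v : TX} {s : ℝ} (hγ : HasDerivAt γ v s)
    (hs : (γ s).1 ∈ I) :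
    HasDerivAt (fun r => edens F U D (γ r)) (dedens f U D D2 (γ s) v) s := by
  have h1 := (h.hU _ hs (γ s).2).comp_hasDerivAt s hγ
  have h2 := (h.hD _ hs (γ s).2).comp_hasDerivAt s hγ
  have hc : ∀ a : TX, HasDerivAt (fun r => D (γ r) a) (D2 (γ s) v a) s := by
    intro a
    have := h2.clm_apply (hasDerivAt_const s a)
    refine this.congr_deriv ?_
    simp
  have hsum := HasDerivAt.fun_sum (u := Finset.univ) (fun i _ => (hc (ex (ee i))).fun_pow 2)
  have h4 := (((hc et).fun_pow 2).const_mul (1/2)).add (hsum.const_mul (1/2)) |>.add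
    ((hF (U (γ s))).comp s h1)
  refine h4.congr_deriv ?_
  simp only [dedens, Fin.sum_univ_three, Nat.cast_ofNat]
  ring

lemma dedens_lin (f : ℝ → ℝ) (U : TX → ℝ) (D : TX → (TX →L[ℝ] ℝ))
    (D2 : TX → (TX →L[ℝ] (TX →L[ℝ] ℝ))) (p : TX) (z : Space) :
    dedens f U D D2 p (et - ex z) = dedens f U D D2 p et
      - (z 0 * dedens f U D D2 p (ex (ee 0)) + z 1 * dedens f U D D2 p (ex (ee 1))
      + z 2 * dedens f U D D2 p (ex (ee 2))) := by
  rw [ex_sum z]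
  simp only [dedens, map_sub, map_add, map_smul, sub_apply, add_apply, smul_apply, smul_eq_mul,
    Fin.sum_univ_three]
  ring

lemma edens_contDiffOn {I : Set ℝ} {U D D2} (h : Sm I U D D2) {F : ℝ → ℝ}
    (hF : ContDiff ℝ 1 F) : ContDiffOn ℝ 1 (edens F U D) (I ×ˢ univ) := by
  unfold edens
  have hc : ∀ a : TX, ContDiffOn ℝ 1 (fun p => D p a) (I ×ˢ univ) :=
    fun a => h.cD.clm_apply contDiffOn_const
  refine ((contDiffOn_const.mul ((hc et).pow 2)).add (contDiffOn_const.mul ?_)).add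
    (hF.comp_contDiffOn h.cU)
  exact ContDiffOn.sum (fun i _ => (hc _).pow 2)

lemma En_hasDerivAt {I : Set ℝ} {U D D2} (h : Sm I U D D2) {F f : ℝ → ℝ}
    (hF : ∀ v, HasDerivAt F (f v) v) (hf : Continuous f) (hFc : ContDiff ℝ 1 F)
    (heq : ∀ s ∈ I, ∀ y, box D2 (s, y) = - f (U (s, y)))
    (t : ℝ) (x : Space) {s : ℝ} (hs : s ∈ I) :
    HasDerivAt (En F U D t x) ((t - s) ^ 2 * ∫ w : Sph,
      (D (s, x + (t - s) • (w:Space)) et * D (s, x + (t - s) • (w:Space)) (ex w)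
        - edens F U D (s, x + (t - s) • (w:Space))) ∂sg) s := by
  have he := edens_contDiffOn h hFc
  have ce := path_contOn _ continuous_id t x (K := Metric.closedBall (0:Space) 1) he.continuousOn
  have cU := path_contOn _ continuous_id t x (K := Metric.closedBall (0:Space) 1) h.cU.continuousOn
  have cD := path_contOn _ continuous_id t x (K := Metric.closedBall (0:Space) 1) h.cD.continuousOn
  have cD2 := path_contOn _ continuous_id t x (K := Metric.closedBall (0:Space) 1) h.cD2
  simp only [id] at ce cU cD cD2
  have cr : ContinuousOn (fun p : ℝ × Space => t - p.1) (I ×ˢ Metric.closedBall (0:Space) 1) :=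
    (by fun_prop : Continuous (fun p : ℝ × Space => t - p.1)).continuousOn
  have cv : ContinuousOn (fun p : ℝ × Space => et - ex p.2) (I ×ˢ Metric.closedBall (0:Space) 1) :=
    (by unfold ex; fun_prop : Continuous (fun p : ℝ × Space => et - ex p.2)).continuousOn
  have cDc : ∀ a : TX, ContinuousOn (fun p : ℝ × Space => D (p.1, x + (t - p.1) • p.2) a)
    (I ×ˢ Metric.closedBall (0:Space) 1) := fun a => cD.clm_apply continuousOn_const
  have cD2c : ∀ a : TX, ContinuousOn
    (fun p : ℝ × Space => D2 (p.1, x + (t - p.1) • p.2) (et - ex p.2) a)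
    (I ×ˢ Metric.closedBall (0:Space) 1) := fun a => (cD2.clm_apply cv).clm_apply continuousOn_const
  have main : HasDerivAt (En F U D t x) (∫ z in Metric.closedBall (0:Space) 1,
      (-3 * (t - s) ^ 2 * edens F U D (s, x + (t - s) • z)
        + (t - s) ^ 3 * dedens f U D D2 (s, x + (t - s) • z) (et - ex z))) s := by
    refine param_hasDerivAt (I := I) volume (isCompact_closedBall _ _) measurableSet_closedBall
      (k := fun s z => (t - s) ^ 3 * edens F U D (s, x + (t - s) • z))
      (k' := fun s z => (-3 * (t - s) ^ 2 * edens F U D (s, x + (t - s) • z)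
        + (t - s) ^ 3 * dedens f U D D2 (s, x + (t - s) • z) (et - ex z)))
      h.op ?_ ?_ ?_ hs
    · exact (cr.pow 3).mul ce
    · refine ((continuousOn_const.mul (cr.pow 2)).mul ce).add ((cr.pow 3).mul ?_)
      unfold dedens
      refine (((cDc et).mul (cD2c et)).add (continuousOn_finsetSum _ fun i _ =>
        (cDc _).mul (cD2c _))).add ((hf.comp_continuousOn cU).mul (cD.clm_apply cv))
    · intro s hs z _
      have h1 := dir_dedens h hF (path_deriv t x z s) hs
      have h2 := (((hasDerivAt_id s).const_sub t).fun_pow 3).mul h1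
      refine h2.congr_deriv ?_
      simp
  refine main.congr_deriv ?_
  set r := t - s with hr
  have hsl : ContDiff ℝ 1 (fun z : Space => ((s, x + r • z) : TX)) := by fun_prop
  have hslm : ∀ z : Space, ((s, x + r • z) : TX) ∈ I ×ˢ (univ : Set Space) :=
    fun z => ⟨hs, mem_univ _⟩
  have hDz : ∀ a : TX, ContDiff ℝ 1 (fun z : Space => D (s, x + r • z) a) := fun a =>
    (h.cD.comp_contDiff hsl hslm).clm_apply contDiff_const
  have hez : ContDiff ℝ 1 (fun z : Space => edens F U D (s, x + r • z)) :=
    he.comp_contDiff hsl hslm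
  have hco : ∀ i, ContDiff ℝ 1 (fun z : Space => z i) := fun i =>
    (EuclideanSpace.proj i : Space →L[ℝ] ℝ).contDiff
  set X : Fin 3 → Space → ℝ := fun i z => r ^ 2 * (D (s, x + r • z) et * D (s, x + r • z) (ex (ee i))
    - z i * edens F U D (s, x + r • z)) with hXdef
  have hX : ∀ i, ContDiff ℝ 1 (X i) := fun i =>
    contDiff_const.mul (((hDz et).mul (hDz _)).sub ((hco i).mul hez))
  have hdiv := divergence_ball X hX
  have hpd : ∀ i z, pd i (X i) z = r ^ 2 * (r * D2 (s, x + r • z) (ex (ee i)) et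
      * D (s, x + r • z) (ex (ee i)) + D (s, x + r • z) et * (r * D2 (s, x + r • z) (ex (ee i)) (ex (ee i)))
      - edens F U D (s, x + r • z) - z i * (r * dedens f U D D2 (s, x + r • z) (ex (ee i)))) := by
    intro i z
    -- line derivative
    have hl : HasDerivAt (fun τ : ℝ => X i (z + τ • ee i)) (pd i (X i) z) 0 := by
      have h1 : HasDerivAt (fun τ : ℝ => z + τ • ee i) (ee i) 0 := by
        simpa using ((hasDerivAt_id (0:ℝ)).smul_const (ee i)).const_add z
      have h2 : HasFDerivAt (X i) (fderiv ℝ (X i) z) (z + (0:ℝ) • ee i) := by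
        simpa using (((hX i).differentiable (by simp)) z).hasFDerivAt
      exact h2.comp_hasDerivAt 0 h1
    have hγ : HasDerivAt (fun τ : ℝ => ((s, x + r • (z + τ • ee i)) : TX)) (r • ex (ee i)) 0 := by
      have h1 : HasDerivAt (fun τ : ℝ => x + r • (z + τ • ee i)) (r • ee i) 0 := by
        simpa using ((((hasDerivAt_id (0:ℝ)).smul_const (ee i)).const_add z).const_smul r).const_add x
      have := (hasDerivAt_const (0:ℝ) s).prodMk h1
      simpa [ex] using this
    have e1 := dir_dedens h hF hγ hs
    have e2 := (h.hD s hs (x + r • (z + (0:ℝ) • ee i))).comp_hasDerivAt 0 hγ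
    have hc : ∀ a : TX, HasDerivAt (fun τ : ℝ => D (s, x + r • (z + τ • ee i)) a)
        (r * D2 (s, x + r • z) (ex (ee i)) a) 0 := by
      intro a
      have := e2.clm_apply (hasDerivAt_const 0 a)
      refine this.congr_deriv ?_
      simp only [map_smul, smul_apply, smul_eq_mul, zero_smul, add_zero, map_zero]
    have hzi : HasDerivAt (fun τ : ℝ => (z + τ • ee i) i) 1 0 := by
      have : (fun τ : ℝ => (z + τ • ee i) i) = fun τ => z i + τ := by
        ext τ; simp
      rw [this]
      exact (hasDerivAt_id _).const_add _
    have e3 := (((hc et).fun_mul (hc (ex (ee i)))).fun_sub (hzi.fun_mul e1)).const_mul (r ^ 2)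
    have e4 := hl.unique e3
    rw [e4]
    have hds : ∀ p, dedens f U D D2 p (r • ex (ee i)) = r * dedens f U D D2 p (ex (ee i)) := by
      intro p
      simp only [dedens, map_smul, smul_apply, smul_eq_mul, Fin.sum_univ_three]
      ring
    simp only [hds, zero_smul, add_zero]
    ring
  have hint : (fun z : Space => (-3 * r ^ 2 * edens F U D (s, x + r • z)
        + r ^ 3 * dedens f U D D2 (s, x + r • z) (et - ex z))) = fun z => ∑ j, pd j (X j) z := by
    ext z
    have hbox := heq s hs (x + r • z)
    simp only [hpd]
    rw [dedens_lin]
    simp only [Fin.sum_univ_three]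
    have hd : dedens f U D D2 (s, x + r • z) et =
        D (s, x + r • z) et * D2 (s, x + r • z) et et
        + (D (s, x + r • z) (ex (ee 0)) * D2 (s, x + r • z) (ex (ee 0)) et
        + D (s, x + r • z) (ex (ee 1)) * D2 (s, x + r • z) (ex (ee 1)) et
        + D (s, x + r • z) (ex (ee 2)) * D2 (s, x + r • z) (ex (ee 2)) et)
        + f (U (s, x + r • z)) * D (s, x + r • z) et := by
      simp only [dedens, Fin.sum_univ_three, h.sym s hs (x + r • z) et]
    simp only [box, lapD, Fin.sum_univ_three] at hbox
    rw [hd]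
    linear_combination (r ^ 3 * D (s, x + r • z) et) * hbox
  rw [hint, hdiv, ← integral_const_mul]
  congr 1
  ext w
  rw [clm_ex (D (s, x + r • (w:Space))) w]
  simp only [hXdef, Fin.sum_univ_three]
  have hw := sph_sum w
  linear_combination (-(r ^ 2 * edens F U D (s, x + r • (w:Space)))) * hw

lemma flux_le (F : ℝ → ℝ) (U : TX → ℝ) (D : TX → (TX →L[ℝ] ℝ)) (p : TX) (w : Sph) :
    D p et * D p (ex w) - edens F U D p ≤ - F (U p) := by
  have hw := sph_sum w
  have h1 : (D p (ex w)) ^ 2 ≤ ∑ i, (D p (ex (ee i))) ^ 2 := by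
    rw [clm_ex (D p) w, Fin.sum_univ_three]
    generalize D p (ex (ee 0)) = a at *
    generalize D p (ex (ee 1)) = b at *
    generalize D p (ex (ee 2)) = c at *
    generalize (w:Space) 0 = u at *
    generalize (w:Space) 1 = v at *
    generalize (w:Space) 2 = z at *
    have e : a ^ 2 + b ^ 2 + c ^ 2 = (u ^ 2 + v ^ 2 + z ^ 2) * (a ^ 2 + b ^ 2 + c ^ 2) := by
      rw [hw]; ring
    rw [e]
    nlinarith [sq_nonneg (u * b - v * a), sq_nonneg (u * c - z * a), sq_nonneg (v * c - z * b)]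
  unfold edens
  nlinarith [sq_nonneg (D p et - D p (ex w))]

lemma one_lt_log10 {a : ℝ} (ha : 0 ≤ a) : 1 < Real.log (10 + a) := by
  rw [Real.lt_log_iff_exp_lt (by linarith)]
  have := Real.exp_one_lt_d9
  linarith

lemma loglog_pos {a : ℝ} (ha : 0 ≤ a) : 0 < Real.log (Real.log (10 + a)) :=
  Real.log_pos (one_lt_log10 ha)

def kap : ℝ := 1 + Real.log 2 / Real.log (Real.log (10 + 0))

lemma kap_pos : 1 ≤ kap := by
  unfold kap
  have := loglog_pos le_rfl
  have h2 := Real.log_pos one_lt_two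
  have : 0 ≤ Real.log 2 / Real.log (Real.log (10 + 0)) := by positivity
  linarith

lemma loglog_mono {a b : ℝ} (ha : 0 ≤ a) (hab : a ≤ b) :
    Real.log (Real.log (10 + a)) ≤ Real.log (Real.log (10 + b)) := by
  have := one_lt_log10 ha
  exact Real.log_le_log (by linarith) (Real.log_le_log (by linarith) (by linarith))

lemma loglog_le {a b : ℝ} (ha : 0 ≤ a) (hb : 0 ≤ b) (h : 10 + a ≤ (10 + b) ^ 2) :
    Real.log (Real.log (10 + a)) ≤ kap * Real.log (Real.log (10 + b)) := by
  have h1 := one_lt_log10 ha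
  have h2 := one_lt_log10 hb
  have h3 : Real.log (10 + a) ≤ 2 * Real.log (10 + b) := by
    have := Real.log_le_log (by linarith) h
    rwa [Real.log_pow, Nat.cast_ofNat] at this
  have h4 : Real.log (Real.log (10 + a)) ≤ Real.log 2 + Real.log (Real.log (10 + b)) := by
    rw [← Real.log_mul (by norm_num) (by linarith)]
    exact Real.log_le_log (by linarith) h3
  have h0 := loglog_pos (le_refl (0:ℝ))
  have h5 : Real.log 2 ≤ Real.log 2 / Real.log (Real.log (10 + 0)) * Real.log (Real.log (10 + b)) := by
    rw [div_mul_eq_mul_div, le_div_iff₀ h0]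
    exact mul_le_mul_of_nonneg_left (loglog_mono le_rfl hb) (Real.log_pos one_lt_two).le
  unfold kap
  linarith

lemma g_pos (c u : ℝ) : 0 < g c u := Real.rpow_pos_of_pos (loglog_pos (sq_nonneg u)) c

lemma g_mono {c u v : ℝ} (hc : 0 < c) (h : u ^ 2 ≤ v ^ 2) : g c u ≤ g c v :=
  Real.rpow_le_rpow (loglog_pos (sq_nonneg u)).le (loglog_mono (sq_nonneg u) h) hc.le

lemma g_le {c u v : ℝ} (hc : 0 < c) (h : 10 + u ^ 2 ≤ (10 + v ^ 2) ^ 2) :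
    g c u ≤ kap ^ c * g c v := by
  unfold g
  rw [← Real.mul_rpow (by linarith [kap_pos]) (loglog_pos (sq_nonneg v)).le]
  exact Real.rpow_le_rpow (loglog_pos (sq_nonneg u)).le
    (loglog_le (sq_nonneg u) (sq_nonneg v) h) hc.le

lemma g_cont (c : ℝ) : Continuous (g c) := by
  unfold g
  have h1 : ∀ u : ℝ, 10 + u ^ 2 ≠ 0 := fun u => by positivity
  have h2 : ∀ u : ℝ, Real.log (10 + u ^ 2) ≠ 0 := fun u => by
    have := one_lt_log10 (sq_nonneg u); linarith
  have h3 : Continuous (fun u : ℝ => Real.log (Real.log (10 + u ^ 2))) :=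
    Continuous.log (Continuous.log (by fun_prop) h1) h2
  exact h3.rpow_const (fun u => Or.inl (loglog_pos (sq_nonneg u)).ne')

lemma f_cont (c : ℝ) : Continuous (f c) := by
  unfold f
  have := g_cont c
  fun_prop

lemma Fpot_deriv (c v : ℝ) : HasDerivAt (Fpot c) (f c v) v :=
  intervalIntegral.integral_hasDerivAt_right ((f_cont c).intervalIntegrable _ _)
    ((f_cont c).stronglyMeasurableAtFilter _ _) (f_cont c).continuousAt

lemma Fpot_contDiff (c : ℝ) : ContDiff ℝ 1 (Fpot c) := by
  rw [contDiff_one_iff_deriv]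
  refine ⟨fun v => (Fpot_deriv c v).differentiableAt, ?_⟩
  have : deriv (Fpot c) = f c := funext fun v => (Fpot_deriv c v).deriv
  rw [this]
  exact f_cont c

lemma Fpot_zero (c : ℝ) : Fpot c 0 = 0 := by simp [Fpot]

lemma g_neg (c u : ℝ) : g c (-u) = g c u := by simp [g]

lemma Fpot_neg (c u : ℝ) : Fpot c (-u) = Fpot c u := by
  unfold Fpot
  have h : ∀ v, f c v = - f c (-v) := by
    intro v
    simp only [f, g_neg]
    ring
  have h2 : ∫ v in (0:ℝ)..u, f c v = - ∫ v in (0:ℝ)..u, f c (-v) := by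
    rw [← intervalIntegral.integral_neg]
    congr 1
    ext v
    exact h v
  rw [h2, intervalIntegral.integral_comp_neg, neg_zero, ← intervalIntegral.integral_symm]

lemma Fpot_lower_nonneg {c u : ℝ} (hc : 0 < c) (hu : 0 ≤ u) :
    u ^ 6 * g c u ≤ 64 * kap ^ c * Fpot c u := by
  have hi : ∀ a b, IntervalIntegrable (f c) volume a b := fun a b => (f_cont c).intervalIntegrable _ _
  have hsplit : Fpot c u = (∫ v in (0:ℝ)..(u/2), f c v) + ∫ v in (u/2)..u, f c v :=
    (intervalIntegral.integral_add_adjacent_intervals (hi _ _) (hi _ _)).symm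
  have h1 : 0 ≤ ∫ v in (0:ℝ)..(u/2), f c v := by
    apply intervalIntegral.integral_nonneg (by linarith)
    intro v hv
    have := (g_pos c v).le
    have := hv.1
    unfold f
    positivity
  have h2 : (u/2) * ((u/2)^5 * g c (u/2)) ≤ ∫ v in (u/2)..u, f c v := by
    have : ∫ v in (u/2)..u, ((u/2)^5 * g c (u/2)) = (u/2) * ((u/2)^5 * g c (u/2)) := by
      rw [intervalIntegral.integral_const, smul_eq_mul]; ring
    rw [← this]
    apply intervalIntegral.integral_mono_on (by linarith) (by simp) (hi _ _)
    intro v hv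
    unfold f
    have hv0 : u / 2 ≤ v := hv.1
    apply mul_le_mul (pow_le_pow_left₀ (by linarith) hv0 5) (g_mono hc _) (g_pos _ _).le
    · have : 0 ≤ v := by linarith
      positivity
    · exact pow_le_pow_left₀ (by linarith) hv0 2
  have h3 : g c u ≤ kap ^ c * g c (u/2) := by
    apply g_le hc
    nlinarith [sq_nonneg u, sq_nonneg (u^2)]
  have hk : 0 < kap ^ c := Real.rpow_pos_of_pos (by linarith [kap_pos]) c
  calc u ^ 6 * g c u ≤ u ^ 6 * (kap ^ c * g c (u/2)) := by gcongr
    _ = 64 * kap ^ c * ((u/2) * ((u/2)^5 * g c (u/2))) := by ring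
    _ ≤ 64 * kap ^ c * Fpot c u := by
      apply mul_le_mul_of_nonneg_left _ (by positivity)
      linarith

lemma Fpot_lower {c : ℝ} (hc : 0 < c) (u : ℝ) :
    u ^ 6 * g c u ≤ 64 * kap ^ c * Fpot c u := by
  rcases le_total 0 u with h | h
  · exact Fpot_lower_nonneg hc h
  · have := Fpot_lower_nonneg hc (neg_nonneg.2 h)
    rw [g_neg, Fpot_neg] at this
    have e : (-u) ^ 6 = u ^ 6 := by ring
    rwa [e] at this

lemma Fpot_nonneg {c : ℝ} (hc : 0 < c) (u : ℝ) : 0 ≤ Fpot c u := by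
  have h := Fpot_lower hc u
  have hk : 0 < kap ^ c := Real.rpow_pos_of_pos (by linarith [kap_pos]) c
  have h2 : 0 ≤ u ^ 6 * g c u := by
    have := (g_pos c u).le
    have : 0 ≤ u ^ 6 := by positivity
    positivity
  have : 0 ≤ 64 * kap ^ c * Fpot c u := h2.trans h
  exact nonneg_of_mul_nonneg_right this (by positivity)

lemma young_aux {r u l : ℝ} (hr : r ≠ 0) (hl : 0 < l) :
    |r| * |u| ^ 5 ≤ l * r ^ 2 * u ^ 6 + (l ^ 5)⁻¹ * (r ^ 4)⁻¹ := by
  have hr' : 0 < |r| := abs_pos.2 hr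
  have e2 : r ^ 2 = |r| ^ 2 := (sq_abs r).symm
  have e4 : r ^ 4 = |r| ^ 4 := by rw [show (4:ℕ) = 2 * 2 from rfl, pow_mul, pow_mul, sq_abs]
  have e6 : u ^ 6 = |u| ^ 6 := by rw [show (6:ℕ) = 2 * 3 from rfl, pow_mul, pow_mul, sq_abs]
  rw [e2, e4, e6]
  have hu : 0 ≤ |u| := abs_nonneg u
  generalize |r| = a at *
  generalize |u| = b at *
  by_cases h : 1 ≤ l * a * b
  · have h1 : a * b ^ 5 * 1 ≤ a * b ^ 5 * (l * a * b) :=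
      mul_le_mul_of_nonneg_left h (by positivity)
    have h2 : 0 ≤ (l ^ 5)⁻¹ * (a ^ 4)⁻¹ := by positivity
    calc a * b ^ 5 ≤ a * b ^ 5 * (l * a * b) := by linarith
      _ = l * a ^ 2 * b ^ 6 := by ring
      _ ≤ _ := by linarith
  · push Not at h
    have h1 : (l * a * b) ^ 5 ≤ 1 := pow_le_one₀ (by positivity) h.le
    have h2 : 0 ≤ l * a ^ 2 * b ^ 6 := by positivity
    have h3 : a * b ^ 5 ≤ (l ^ 5)⁻¹ * (a ^ 4)⁻¹ := by
      rw [← mul_inv, ← one_div, le_div_iff₀ (by positivity)]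
      calc a * b ^ 5 * (l ^ 5 * a ^ 4) = (l * a * b) ^ 5 := by ring
        _ ≤ 1 := h1
    linarith

lemma opt_aux {A E B : ℝ} (hE : 0 ≤ E) (hB : 0 < B)
    (h : ∀ l : ℝ, 0 < l → A ≤ l * E + (l ^ 5)⁻¹ * B) :
    A ≤ 2 * (E ^ ((5:ℝ)/6) * B ^ ((1:ℝ)/6)) := by
  rcases hE.eq_or_lt with h0 | hE
  · subst h0
    rw [Real.zero_rpow (by norm_num)]
    have ht : Filter.Tendsto (fun l : ℝ => l * 0 + (l ^ 5)⁻¹ * B) Filter.atTop (nhds 0) := by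
      have h1 : Filter.Tendsto (fun l : ℝ => (l ^ 5)⁻¹) Filter.atTop (nhds 0) :=
        tendsto_inv_atTop_zero.comp (Filter.tendsto_pow_atTop (by norm_num))
      simpa using h1.mul_const B
    have := ge_of_tendsto ht ((Filter.eventually_gt_atTop 0).mono h)
    simpa using this
  · set a := E ^ ((1:ℝ)/6) with ha
    set b := B ^ ((1:ℝ)/6) with hb
    have ha0 : 0 < a := Real.rpow_pos_of_pos hE _
    have hb0 : 0 < b := Real.rpow_pos_of_pos hB _
    have hEa : E = a ^ 6 := by
      rw [ha, ← Real.rpow_natCast, ← Real.rpow_mul hE.le]; norm_num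
    have hBb : B = b ^ 6 := by
      rw [hb, ← Real.rpow_natCast, ← Real.rpow_mul hB.le]; norm_num
    have hE5 : E ^ ((5:ℝ)/6) = a ^ 5 := by
      rw [ha, ← Real.rpow_natCast, ← Real.rpow_mul hE.le]; norm_num
    have := h (b / a) (by positivity)
    rw [hE5]
    refine this.trans (le_of_eq ?_)
    rw [hEa, hBb]
    field_simp
    ring

lemma sg_univ : sg.real univ = 4 * Real.pi := by
  rw [Measure.toSphere_real_apply_univ, finrank_Space, measureReal_def,
    EuclideanSpace.volume_ball_fin_three]
  have := Real.pi_pos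
  rw [ENNReal.toReal_mul, ENNReal.toReal_pow, ENNReal.toReal_ofReal (by norm_num),
    ENNReal.toReal_ofReal (by positivity)]
  norm_num
  ring

lemma sg_ge : 12 ≤ sg.real univ := by
  rw [sg_univ]; linarith [Real.pi_gt_three]

lemma inv_sq_int : IntegrableOn (fun r : ℝ => ((1 + r) ^ 2)⁻¹) (Ioi 0) ∧
    ∫ r in Ioi (0:ℝ), ((1 + r) ^ 2)⁻¹ = 1 := by
  have hd : ∀ r ∈ Ici (0:ℝ), HasDerivAt (fun r : ℝ => - (1 + r)⁻¹) (((1 + r) ^ 2)⁻¹) r := by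
    intro r hr
    have hr : (0:ℝ) ≤ r := hr
    have h1 : (1 + r) ≠ 0 := by linarith
    have := (((hasDerivAt_id r).const_add 1).inv h1).neg
    refine this.congr_deriv ?_
    simp [div_eq_mul_inv]
  have ht : Filter.Tendsto (fun r : ℝ => - (1 + r)⁻¹) Filter.atTop (nhds 0) := by
    have : Filter.Tendsto (fun r : ℝ => (1 + r)⁻¹) Filter.atTop (nhds 0) :=
      tendsto_inv_atTop_zero.comp (Filter.tendsto_atTop_add_const_left _ _ Filter.tendsto_id)
    simpa using this.neg
  have hn : ∀ r ∈ Ioi (0:ℝ), 0 ≤ ((1 + r) ^ 2)⁻¹ := fun r _ => by positivity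
  refine ⟨integrableOn_Ioi_deriv_of_nonneg' hd hn ht, ?_⟩
  rw [integral_Ioi_of_hasDerivAt_of_nonneg' hd hn ht]
  simp

lemma sobolev_ray {h : Space → ℝ} (hh : ContDiff ℝ 2 h) (hc : HasCompactSupport h) (x : Space)
    (w : Sph) :
    |h x| ≤ (1/2) * (∫ r in Ioi (0:ℝ), r ^ 2 * (‖iteratedFDeriv ℝ 2 h (x + r • (w:Space))‖
      + 2 * ‖fderiv ℝ h (x + r • (w:Space))‖) ^ 2) + 1/2 := by
  have hw : ‖(w:Space)‖ = 1 := by simp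
  have hline : Topology.IsClosedEmbedding (fun r : ℝ => x + r • (w:Space)) := by
    apply Isometry.isClosedEmbedding
    apply Isometry.of_dist_eq
    intro a b
    rw [dist_add_left, dist_eq_norm, ← sub_smul, norm_smul, hw, mul_one, Real.dist_eq,
      Real.norm_eq_abs]
  have hf1 : ContDiff ℝ 1 (fderiv ℝ h) := hh.fderiv_right (by norm_num)
  have cf : Continuous (fderiv ℝ h) := hf1.continuous
  have cff : Continuous (fderiv ℝ (fderiv ℝ h)) := hf1.continuous_fderiv (by simp)
  have ci : Continuous (iteratedFDeriv ℝ 2 h) := hh.continuous_iteratedFDeriv (by simp)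
  have sf : HasCompactSupport (fderiv ℝ h) := hc.fderiv ℝ
  have si : HasCompactSupport (iteratedFDeriv ℝ 2 h) := hc.iteratedFDeriv 2
  set a1 : ℝ → ℝ := fun r => fderiv ℝ h (x + r • (w:Space)) w with ha1
  set a2 : ℝ → ℝ := fun r => fderiv ℝ (fderiv ℝ h) (x + r • (w:Space)) w w with ha2
  have hl : ∀ r : ℝ, HasDerivAt (fun r : ℝ => x + r • (w:Space)) (w:Space) r := by
    intro r
    simpa using ((hasDerivAt_id r).smul_const (w:Space)).const_add x
  have d0 : ∀ r, HasDerivAt (fun r : ℝ => h (x + r • (w:Space))) (a1 r) r := fun r =>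
    ((hh.differentiable (by simp)) _).hasFDerivAt.comp_hasDerivAt r (hl r)
  have d1 : ∀ r, HasDerivAt a1 (a2 r) r := by
    intro r
    have := (((hf1.differentiable (by simp)) _).hasFDerivAt.comp_hasDerivAt r (hl r)).clm_apply
      (hasDerivAt_const r (w:Space))
    refine this.congr_deriv ?_
    simp [ha2]
  set Psi : ℝ → ℝ := fun r => (r / (1 + r)) * a1 r - h (x + r • (w:Space)) with hPsi
  set Psi' : ℝ → ℝ := fun r => ((1 + r) ^ 2)⁻¹ * a1 r + (r / (1 + r)) * a2 r - a1 r with hPsi'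
  have dP : ∀ r ∈ Ici (0:ℝ), HasDerivAt Psi (Psi' r) r := by
    intro r hr
    have hr : (0:ℝ) ≤ r := hr
    have h1 : (1 + r) ≠ 0 := by linarith
    have e := ((hasDerivAt_id' r).fun_div ((hasDerivAt_id' r).const_add 1) h1)
    refine ((e.fun_mul (d1 r)).fun_sub (d0 r)).congr_deriv ?_
    simp only [hPsi', id]
    field_simp
    ring
  have s0 : HasCompactSupport (fun r : ℝ => h (x + r • (w:Space))) :=
    hc.comp_isClosedEmbedding hline
  have s1' : HasCompactSupport (fun r : ℝ => fderiv ℝ h (x + r • (w:Space))) :=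
    sf.comp_isClosedEmbedding hline
  have si' : HasCompactSupport (fun r : ℝ => iteratedFDeriv ℝ 2 h (x + r • (w:Space))) :=
    si.comp_isClosedEmbedding hline
  have s1 : HasCompactSupport a1 := s1'.comp_left (g := fun L : Space →L[ℝ] ℝ => L w) (by simp)
  have s2 : HasCompactSupport a2 :=
    ((sf.fderiv ℝ).comp_isClosedEmbedding hline).comp_left
      (g := fun L : Space →L[ℝ] Space →L[ℝ] ℝ => L w w) (by simp)
  have tP : Filter.Tendsto Psi Filter.atTop (nhds 0) := by
    apply tendsto_nhds_of_eventually_eq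
    have e0 := (hasCompactSupport_iff_eventuallyEq.1 s0)
    have e1 := (hasCompactSupport_iff_eventuallyEq.1 s1)
    rw [Filter.coclosedCompact_eq_cocompact] at e0 e1
    filter_upwards [atTop_le_cocompact e0, atTop_le_cocompact e1] with r h0 h1
    simp only [Pi.zero_apply] at h0 h1
    simp only [hPsi]
    rw [h0, h1]
    simp
  have cPsi' : ContinuousOn Psi' (Ici 0) := by
    have : ∀ r ∈ Ici (0:ℝ), (1 + r) ≠ 0 := fun r hr => by
      have : (0:ℝ) ≤ r := hr
      linarith
    have c1 : Continuous a1 := by simp only [ha1]; fun_prop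
    have c2 : Continuous a2 := by simp only [ha2]; fun_prop
    have cc : ContinuousOn (fun r : ℝ => 1 + r) (Ici 0) := by fun_prop
    refine (((cc.pow 2).inv₀ (fun r hr => pow_ne_zero 2 (this r hr))).mul c1.continuousOn).add
      (((continuousOn_id).div cc this).mul c2.continuousOn) |>.sub c1.continuousOn
  set Q : ℝ → ℝ := fun r => r ^ 2 * (‖iteratedFDeriv ℝ 2 h (x + r • (w:Space))‖
      + 2 * ‖fderiv ℝ h (x + r • (w:Space))‖) ^ 2 with hQ
  have iQ : Integrable Q := by
    apply Continuous.integrable_of_hasCompactSupport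
    · simp only [hQ]; fun_prop
    · have := (si'.norm.add (s1'.norm.comp_left (g := fun t : ℝ => 2 * t) (by simp))).comp_left
        (g := fun t : ℝ => t ^ 2) (by simp)
      exact this.mul_left
  have bnd : ∀ r ∈ Ioi (0:ℝ), |Psi' r| ≤ (1/2) * Q r + (1/2) * ((1 + r) ^ 2)⁻¹ := by
    intro r hr
    have hr : (0:ℝ) < r := hr
    set A := ‖iteratedFDeriv ℝ 2 h (x + r • (w:Space))‖ with hA
    set B := ‖fderiv ℝ h (x + r • (w:Space))‖ with hB
    have hA1 : |a2 r| ≤ A := by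
      have e := (iteratedFDeriv ℝ 2 h (x + r • (w:Space))).le_opNorm ![(w:Space), (w:Space)]
      rw [iteratedFDeriv_two_apply] at e
      simpa [Fin.prod_univ_two, hw] using e
    have hB1 : |a1 r| ≤ B := by
      have e := (fderiv ℝ h (x + r • (w:Space))).le_opNorm (w:Space)
      rwa [hw, mul_one] at e
    have hA0 : 0 ≤ A := norm_nonneg _
    have hB0 : 0 ≤ B := norm_nonneg _
    have e1 : Psi' r = (r / (1 + r)) * a2 r - (r * (2 + r) / (1 + r) ^ 2) * a1 r := by
      simp only [hPsi']
      field_simp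
      ring
    have e2 : r * (2 + r) / (1 + r) ^ 2 ≤ 2 * (r / (1 + r)) := by
      rw [← mul_div_assoc, div_le_div_iff₀ (by positivity) (by positivity)]
      nlinarith [mul_pos hr hr, mul_pos (mul_pos hr hr) hr]
    have e3 : |Psi' r| ≤ (r / (1 + r)) * (A + 2 * B) := by
      rw [e1]
      refine (abs_sub _ _).trans ?_
      rw [abs_mul, abs_mul, abs_of_nonneg (by positivity : 0 ≤ r / (1 + r)),
        abs_of_nonneg (by positivity : 0 ≤ r * (2 + r) / (1 + r) ^ 2)]
      calc r / (1 + r) * |a2 r| + r * (2 + r) / (1 + r) ^ 2 * |a1 r|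
          ≤ r / (1 + r) * A + 2 * (r / (1 + r)) * B := by gcongr
        _ = _ := by ring
    refine e3.trans ?_
    have e4 : (r / (1 + r)) * (A + 2 * B) = (r * (A + 2 * B)) * (1 + r)⁻¹ := by
      rw [div_eq_mul_inv]; ring
    rw [e4]
    have e5 : ((1 + r) ^ 2)⁻¹ = ((1 + r)⁻¹) ^ 2 := (inv_pow _ _).symm
    have e6 : Q r = (r * (A + 2 * B)) ^ 2 := by simp only [hQ]; ring
    rw [e5, e6]
    nlinarith [sq_nonneg (r * (A + 2 * B) - (1 + r)⁻¹)]
  have iR : IntegrableOn (fun r => (1/2) * Q r + (1/2) * ((1 + r) ^ 2)⁻¹) (Ioi 0) :=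
    (iQ.integrableOn.const_mul _).add (inv_sq_int.1.const_mul _)
  have iP : IntegrableOn Psi' (Ioi 0) := by
    refine Integrable.mono' iR ((cPsi'.mono Ioi_subset_Ici_self).aestronglyMeasurable
      measurableSet_Ioi) ?_
    filter_upwards [ae_restrict_mem measurableSet_Ioi] with r hr
    exact bnd r hr
  have hI := integral_Ioi_of_hasDerivAt_of_tendsto' dP iP tP
  have h0 : (0:ℝ) - Psi 0 = h x := by simp [hPsi]
  rw [h0] at hI
  rw [← hI]
  calc |∫ r in Ioi (0:ℝ), Psi' r| ≤ ∫ r in Ioi (0:ℝ), |Psi' r| := abs_integral_le_integral_abs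
    _ ≤ ∫ r in Ioi (0:ℝ), ((1/2) * Q r + (1/2) * ((1 + r) ^ 2)⁻¹) :=
        setIntegral_mono_on iP.abs iR measurableSet_Ioi bnd
    _ = _ := by
      rw [integral_add (iQ.integrableOn.const_mul _) (inv_sq_int.1.const_mul _),
        integral_const_mul, integral_const_mul, inv_sq_int.2, mul_one]

lemma norm_grad (h : Space → ℝ) (x : Space) : ‖gradient h x‖ = ‖fderiv ℝ h x‖ := by
  simp [gradient]

lemma sobolev {h : Space → ℝ} (hh : ContDiff ℝ 2 h) (hc : HasCompactSupport h) {M : ℝ}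
    (hM : H2tildeNorm h ≤ M) (x : Space) : |h x| ≤ 1 + M ^ 2 := by
  have hf1 : ContDiff ℝ 1 (fderiv ℝ h) := hh.fderiv_right (by norm_num)
  have cf : Continuous (fderiv ℝ h) := hf1.continuous
  have ci : Continuous (iteratedFDeriv ℝ 2 h) := hh.continuous_iteratedFDeriv (by simp)
  have sf : HasCompactSupport (fderiv ℝ h) := hc.fderiv ℝ
  have si : HasCompactSupport (iteratedFDeriv ℝ 2 h) := hc.iteratedFDeriv 2
  set k : Space → ℝ := fun y => (‖iteratedFDeriv ℝ 2 h y‖ + 2 * ‖fderiv ℝ h y‖) ^ 2 with hk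
  have ik : Integrable k := by
    apply Continuous.integrable_of_hasCompactSupport
    · simp only [hk]; fun_prop
    · exact (si.norm.add (sf.norm.comp_left (g := fun t : ℝ => 2 * t) (by simp))).comp_left
        (g := fun t : ℝ => t ^ 2) (by simp)
  have ia : Integrable (fun y => ‖iteratedFDeriv ℝ 2 h y‖ ^ 2) := by
    apply Continuous.integrable_of_hasCompactSupport
    · fun_prop
    · exact si.norm.comp_left (g := fun t : ℝ => t ^ 2) (by simp)
  have ib : Integrable (fun y => ‖fderiv ℝ h y‖ ^ 2) := by
    apply Continuous.integrable_of_hasCompactSupport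
    · fun_prop
    · exact sf.norm.comp_left (g := fun t : ℝ => t ^ 2) (by simp)
  have ik' : Integrable (fun y => k (x + y)) := ik.comp_add_left x
  obtain ⟨p1, p2⟩ := polar1 ik'
  rw [integral_add_left_eq_self (μ := (volume : Measure Space)) k x] at p2
  -- sphere integration
  have hs : sg.real univ * |h x| ≤ (1/2) * (∫ y, k y) + (1/2) * sg.real univ := by
    have e1 : ∫ w : Sph, |h x| ∂sg = sg.real univ * |h x| := by
      rw [integral_const, smul_eq_mul]
    rw [← e1, p2, ← integral_const_mul]
    have e2 : ∫ w : Sph, (1/2 : ℝ) ∂sg = (1/2) * sg.real univ := by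
      rw [integral_const, smul_eq_mul, mul_comm]
    rw [← e2, ← integral_add (p1.const_mul _) (integrable_const _)]
    apply integral_mono (integrable_const _) ((p1.const_mul _).add (integrable_const _))
    intro w
    exact sobolev_ray hh hc x w
  -- norms
  have hA : ∀ a b : ℝ, 0 ≤ a → 0 ≤ b → a ^ ((1:ℝ)/2) + b ^ ((1:ℝ)/2) ≤ M → a ≤ M ^ 2 ∧ b ≤ M ^ 2 := by
    intro a b ha hb hab
    rw [← Real.sqrt_eq_rpow, ← Real.sqrt_eq_rpow] at hab
    have h1 := Real.sqrt_nonneg a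
    have h2 := Real.sqrt_nonneg b
    have h3 := Real.sq_sqrt ha
    have h4 := Real.sq_sqrt hb
    constructor <;> nlinarith
  unfold H2tildeNorm at hM
  simp only [norm_grad] at hM
  obtain ⟨m1, m2⟩ := hA _ _ (integral_nonneg fun y => by positivity)
    (integral_nonneg fun y => by positivity) hM
  have hkI : ∫ y, k y ≤ 2 * (∫ y, ‖iteratedFDeriv ℝ 2 h y‖ ^ 2) + 8 * ∫ y, ‖fderiv ℝ h y‖ ^ 2 := by
    rw [← integral_const_mul, ← integral_const_mul, ← integral_add (ia.const_mul _) (ib.const_mul _)]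
    apply integral_mono ik ((ia.const_mul _).add (ib.const_mul _))
    intro y
    simp only [hk, Pi.add_apply]
    nlinarith [sq_nonneg (‖iteratedFDeriv ℝ 2 h y‖ - 2 * ‖fderiv ℝ h y‖)]
  have hS := sg_ge
  by_contra hcon
  push Not at hcon
  nlinarith [sq_nonneg M]

lemma sm_of {I : Set ℝ} {U : TX → ℝ} {D : TX → (TX →L[ℝ] ℝ)} (hI : IsOpen I)
    (hU : ContDiffOn ℝ (⊤ : ℕ∞) U (I ×ˢ univ))
    (hD : ∀ s ∈ I, ∀ y, D (s, y) = fderiv ℝ U (s, y)) : Sm I U D (fderiv ℝ D) := by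
  have ho : IsOpen (I ×ˢ (univ : Set Space)) := hI.prod isOpen_univ
  have hDeq : EqOn D (fderiv ℝ U) (I ×ˢ univ) := fun p hp => hD p.1 hp.1 p.2
  have hU3 : ContDiffOn ℝ 3 U (I ×ˢ univ) := hU.of_le (WithTop.coe_le_coe.2 (le_top : (3:ℕ∞) ≤ ⊤))
  have cD : ContDiffOn ℝ 2 D (I ×ˢ univ) := (hU3.fderiv_of_isOpen ho (by norm_num)).congr hDeq
  have cD2 : ContDiffOn ℝ 1 (fderiv ℝ D) (I ×ˢ univ) := cD.fderiv_of_isOpen ho (by norm_num)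
  have hn : ∀ s ∈ I, ∀ y : Space, (I ×ˢ (univ : Set Space)) ∈ nhds (s, y) :=
    fun s hs y => ho.mem_nhds ⟨hs, mem_univ _⟩
  have h1 : ∀ s ∈ I, ∀ y, HasFDerivAt U (D (s, y)) (s, y) := by
    intro s hs y
    rw [hD s hs y]
    exact ((hU3.contDiffAt (hn s hs y)).differentiableAt (by simp)).hasFDerivAt
  have h2 : ∀ s ∈ I, ∀ y, HasFDerivAt D (fderiv ℝ D (s, y)) (s, y) := by
    intro s hs y
    exact ((cD.contDiffAt (hn s hs y)).differentiableAt (by simp)).hasFDerivAt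
  refine ⟨hI, h1, h2, hU3.of_le (by norm_num), cD.of_le (by norm_num), cD2.continuousOn, ?_⟩
  intro s hs y v w
  refine second_derivative_symmetric_of_eventually (f := U) (f' := D) ?_ (h2 s hs y) v w
  filter_upwards [hn s hs y] with p hp
  exact h1 p.1 hp.1 p.2

lemma tpath (y : Space) (s : ℝ) : HasDerivAt (fun r : ℝ => ((r, y) : TX)) et s :=
  (hasDerivAt_id s).prodMk (hasDerivAt_const s y)

lemma xpath (s : ℝ) (y : Space) :
    HasFDerivAt (fun y : Space => ((s, y) : TX)) (ContinuousLinearMap.inr ℝ ℝ Space) y :=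
  hasFDerivAt_prodMk_right s y

lemma sm_dt1 {I : Set ℝ} {U D D2} (h : Sm I U D D2) {u : ℝ → Space → ℝ}
    (hu : ∀ s y, U (s, y) = u s y) {s : ℝ} (hs : s ∈ I) (y : Space) : dt1 u s y = D (s, y) et := by
  unfold dt1
  simp only [← hu]
  exact ((h.hU s hs y).comp_hasDerivAt s (tpath y s)).deriv

lemma sm_dt2 {I : Set ℝ} {U D D2} (h : Sm I U D D2) {u : ℝ → Space → ℝ}
    (hu : ∀ s y, U (s, y) = u s y) {s : ℝ} (hs : s ∈ I) (y : Space) :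
    dt2 u s y = D2 (s, y) et et := by
  unfold dt2
  have he : (fun s => dt1 u s y) =ᶠ[nhds s] fun s => D (s, y) et := by
    filter_upwards [h.op.mem_nhds hs] with r hr
    exact sm_dt1 h hu hr y
  rw [he.deriv_eq]
  have h2 := (h.hD s hs y).comp_hasDerivAt s (tpath y s)
  have hc : HasDerivAt (fun r => D (r, y) et) (D2 (s, y) et et) s := by
    have := h2.clm_apply (hasDerivAt_const s et)
    refine this.congr_deriv ?_
    simp
  exact hc.deriv

lemma sm_fx {I : Set ℝ} {U D D2} (h : Sm I U D D2) {u : ℝ → Space → ℝ}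
    (hu : ∀ s y, U (s, y) = u s y) {s : ℝ} (hs : s ∈ I) (y v : Space) :
    fderiv ℝ (u s) y v = D (s, y) (ex v) := by
  have e : u s = U ∘ (fun y => (s, y)) := by ext y; simp [hu]
  rw [e, ((h.hU s hs y).comp y (xpath s y)).fderiv]
  simp

lemma sm_lap {I : Set ℝ} {U D D2} (h : Sm I U D D2) {u : ℝ → Space → ℝ}
    (hu : ∀ s y, U (s, y) = u s y) {s : ℝ} (hs : s ∈ I) (y : Space) :
    lap (u s) y = lapD D2 (s, y) := by
  unfold lap lapD
  refine Finset.sum_congr rfl fun i _ => ?_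
  have e : (fun y => fderiv ℝ (u s) y (EuclideanSpace.single i 1))
      = fun y => (D ∘ (fun y => (s, y))) y (ex (ee i)) := by
    ext y; rw [sm_fx h hu hs]; rfl
  rw [e]
  have := (((h.hD s hs y).comp y (xpath s y)).clm_apply (hasFDerivAt_const (ex (ee i)) y)).fderiv
  rw [this]
  simp

lemma sm_box {I : Set ℝ} {U D D2} (h : Sm I U D D2) {u : ℝ → Space → ℝ}
    (hu : ∀ s y, U (s, y) = u s y) {s : ℝ} (hs : s ∈ I) (y : Space) :
    box D2 (s, y) = dt2 u s y - lap (u s) y := by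
  rw [box, sm_dt2 h hu hs, sm_lap h hu hs]

/-- data attached to a solution on a closed interval -/
structure Data (c : ℝ) (a b : ℝ) (u : ℝ → Space → ℝ) (U : TX → ℝ) (D : TX → (TX →L[ℝ] ℝ))
    (D2 : TX → (TX →L[ℝ] (TX →L[ℝ] ℝ))) : Prop where
  hab : a < b
  hu : ∀ s y, U (s, y) = u s y
  sm : Sm (Ioo a b) U D D2
  heq : ∀ s ∈ Ioo a b, ∀ y, box D2 (s, y) = - f c (U (s, y))
  cU : ContinuousOn U (Icc a b ×ˢ univ)
  cD : ContinuousOn D (Icc a b ×ˢ univ)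
  cs : ∀ s ∈ Icc a b, ContDiff ℝ 2 (u s)
  fx : ∀ s ∈ Icc a b, ∀ y v, fderiv ℝ (u s) y v = D (s, y) (ex v)
  dt : ∀ s ∈ Icc a b, ∀ y, dt1 u s y = 0 ∨ dt1 u s y = D (s, y) et
  dti : ∀ s ∈ Ioo a b, ∀ y, dt1 u s y = D (s, y) et
  spt : ∀ s ∈ Icc a b, HasCompactSupport (u s)

lemma data_of {c a b : ℝ} {u : ℝ → Space → ℝ} (hab : a < b) (h : IsClassicalSol c (Icc a b) u) :
    ∃ U D D2, Data c a b u U D D2 := by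
  set U : TX → ℝ := fun p => u p.1 p.2 with hUdef
  set S : Set TX := Icc a b ×ˢ univ with hS
  have hud : UniqueDiffOn ℝ S := (uniqueDiffOn_Icc hab).prod uniqueDiffOn_univ
  have hu : ∀ s y, U (s, y) = u s y := fun s y => rfl
  have hsm := h.smooth
  set D : TX → (TX →L[ℝ] ℝ) := fderivWithin ℝ U S with hDdef
  have hsub : Ioo a b ×ˢ (univ : Set Space) ⊆ S := prod_mono Ioo_subset_Icc_self subset_rfl
  have hdw : ∀ s ∈ Icc a b, ∀ y, HasFDerivWithinAt U (D (s, y)) S (s, y) := fun s hs y =>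
    ((hsm (s, y) ⟨hs, mem_univ _⟩).differentiableWithinAt (by simp)).hasFDerivWithinAt
  have sm : Sm (Ioo a b) U D (fderiv ℝ D) := by
    refine sm_of isOpen_Ioo (hsm.mono hsub) ?_
    intro s hs y
    exact fderivWithin_of_mem_nhds (Filter.mem_of_superset
      ((isOpen_Ioo.prod isOpen_univ).mem_nhds (show (s, y) ∈ Ioo a b ×ˢ (univ : Set Space) from
        ⟨hs, mem_univ _⟩)) hsub)
  refine ⟨U, D, fderiv ℝ D, hab, hu, sm, ?_, hsm.continuousOn, 
    hsm.continuousOn_fderivWithin hud (by simp), ?_, ?_, ?_, fun s hs y => sm_dt1 sm hu hs y, 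
    h.compactSpt⟩
  · intro s hs y
    rw [sm_box sm hu hs, h.eqn s (Ioo_subset_Icc_self hs)]
  · intro s hs
    have : ContDiff ℝ (⊤ : ℕ∞) (u s) := by
      rw [← contDiffOn_univ]
      exact hsm.comp (g := U) (f := fun y : Space => (s, y))
        (contDiff_prodMk_right s).contDiffOn (fun y _ => ⟨hs, mem_univ _⟩)
    exact this.of_le (WithTop.coe_le_coe.2 (le_top : (2:ℕ∞) ≤ ⊤))
  · intro s hs y v
    have e : u s = U ∘ (fun y => (s, y)) := rfl
    have := (hdw s hs y).comp (t := S) y ((xpath s y).hasFDerivWithinAt (s := univ))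
      (fun y _ => ⟨hs, mem_univ _⟩)
    rw [hasFDerivWithinAt_univ] at this
    rw [e, this.fderiv]
    simp
  · intro s hs y
    unfold dt1
    by_cases hd : DifferentiableAt ℝ (fun r => u r y) s
    · right
      have h1 := (hdw s hs y).comp_hasDerivWithinAt (t := S) s
        ((tpath y s).hasDerivWithinAt (s := Icc a b)) (fun r hr => ⟨hr, mem_univ _⟩)
      have h2 : HasDerivWithinAt (fun r => u r y) (deriv (fun r => u r y) s) (Icc a b) s :=
        hd.hasDerivAt.hasDerivWithinAt
      exact ((uniqueDiffOn_Icc hab) s hs).eq_deriv _ h2 h1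
    · left
      exact deriv_zero_of_not_differentiableAt hd

lemma grad_sq (h : Space → ℝ) (x : Space) :
    ‖gradient h x‖ ^ 2 = ∑ i, (fderiv ℝ h x (ee i)) ^ 2 := by
  rw [EuclideanSpace.real_norm_sq_eq]
  refine Finset.sum_congr rfl fun i _ => ?_
  rw [← inner_gradient_left, EuclideanSpace.inner_single_right]
  simp

section
variable {c a b : ℝ} {u : ℝ → Space → ℝ} {U : TX → ℝ} {D : TX → (TX →L[ℝ] ℝ)}
    {D2 : TX → (TX →L[ℝ] (TX →L[ℝ] ℝ))}

lemma edens_nonneg (hc : 0 < c) (p : TX) : 0 ≤ edens (Fpot c) U D p := by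
  unfold edens
  have := Fpot_nonneg hc (U p)
  have : 0 ≤ ∑ i, (D p (ex (ee i))) ^ 2 := Finset.sum_nonneg fun i _ => sq_nonneg _
  positivity

lemma edens_cont (h : Data c a b u U D D2) :
    ContinuousOn (edens (Fpot c) U D) (Icc a b ×ˢ univ) := by
  unfold edens
  have hc : ∀ v : TX, ContinuousOn (fun p => D p v) (Icc a b ×ˢ univ) :=
    fun v => h.cD.clm_apply continuousOn_const
  refine ((continuousOn_const.mul ((hc et).pow 2)).add (continuousOn_const.mul ?_)).add
    ((Fpot_contDiff c).continuous.comp_continuousOn h.cU)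
  exact continuousOn_finsetSum _ (fun i _ => (hc _).pow 2)

lemma slice_cont {Y : Type*} [TopologicalSpace Y] {q : TX → Y} {J : Set ℝ}
    (hq : ContinuousOn q (J ×ˢ univ)) {s : ℝ} (hs : s ∈ J) : Continuous (fun y => q (s, y)) := by
  rw [← continuousOn_univ]
  exact hq.comp (by fun_prop) (fun y _ => ⟨hs, mem_univ _⟩)

lemma edens_eq (h : Data c a b u U D D2) {s : ℝ} (hs : s ∈ Icc a b) (y : Space) :
    edens (Fpot c) U D (s, y) = (1/2) * (D (s, y) et) ^ 2 + (1/2) * ‖gradient (u s) y‖ ^ 2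
      + Fpot c (u s y) := by
  rw [edens, h.hu, grad_sq]
  simp only [h.fx s hs]

/-- integral of pieces -/
lemma pieces (hc : 0 < c) (h : Data c a b u U D D2) {s : ℝ} (hs : s ∈ Icc a b)
    (hi : Integrable (fun y => edens (Fpot c) U D (s, y))) {β : Space → ℝ} (hβ : Continuous β)
    (hle : ∀ y, (β y) ^ 2 ≤ (D (s, y) et) ^ 2) :
    Integrable (fun y => (1/2) * (β y) ^ 2 + (1/2) * ‖gradient (u s) y‖ ^ 2 + Fpot c (u s y)) ∧
    ∫ y, ((1/2) * (β y) ^ 2 + (1/2) * ‖gradient (u s) y‖ ^ 2 + Fpot c (u s y)) =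
      (1/2) * (∫ y, (β y) ^ 2) + (1/2) * (∫ y, ‖gradient (u s) y‖ ^ 2) + ∫ y, Fpot c (u s y) := by
  have hF : ∀ y, 0 ≤ Fpot c (u s y) := fun y => Fpot_nonneg hc _
  have cF : Continuous (fun y => Fpot c (u s y)) :=
    (Fpot_contDiff c).continuous.comp (h.cs s hs).continuous
  have cG : Continuous (fun y => ‖gradient (u s) y‖ ^ 2) := by
    simp only [grad_sq]
    have : Continuous (fderiv ℝ (u s)) := (h.cs s hs).continuous_fderiv (by simp)
    fun_prop
  have i1 : Integrable (fun y => (1/2) * (β y) ^ 2) := by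
    refine hi.mono' (by fun_prop) (Filter.Eventually.of_forall fun y => ?_)
    rw [edens_eq h hs, Real.norm_of_nonneg (by positivity)]
    have := hF y
    have := hle y
    nlinarith [sq_nonneg ‖gradient (u s) y‖]
  have i2 : Integrable (fun y => (1/2) * ‖gradient (u s) y‖ ^ 2) := by
    refine hi.mono' (cG.const_mul (1/2)).aestronglyMeasurable (Filter.Eventually.of_forall fun y => ?_)
    rw [edens_eq h hs, Real.norm_of_nonneg (by positivity)]
    have := hF y
    nlinarith [sq_nonneg (D (s, y) et)]
  have i3 : Integrable (fun y => Fpot c (u s y)) := by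
    refine hi.mono' cF.aestronglyMeasurable (Filter.Eventually.of_forall fun y => ?_)
    rw [edens_eq h hs, Real.norm_of_nonneg (hF y)]
    nlinarith [sq_nonneg (D (s, y) et), sq_nonneg ‖gradient (u s) y‖]
  refine ⟨(i1.add i2).add i3, ?_⟩
  rw [integral_add (f := fun y => (1/2) * (β y) ^ 2 + (1/2) * ‖gradient (u s) y‖ ^ 2)
    (i1.add i2) i3, integral_add i1 i2, integral_const_mul, integral_const_mul]

lemma good_time (h : Data c a b u U D D2) :
    ∃ s₀ ∈ Ioo a b, ∃ n : ℕ, ∀ x : Space, (n:ℝ) < ‖x‖ → edens (Fpot c) U D (s₀, x) = 0 := by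
  set A : ℕ → Set ℝ := fun n => Iic a ∪ Ici b ∪
    (⋂ x : {x : Space // (n:ℝ) < ‖x‖}, (Icc a b ∩ (fun s => U (s, x.1)) ⁻¹' {0}))  with hA
  have hcl : ∀ n, IsClosed (A n) := by
    intro n
    refine (isClosed_Iic.union isClosed_Ici).union (isClosed_iInter fun x => ?_)
    refine ContinuousOn.preimage_isClosed_of_isClosed ?_ isClosed_Icc isClosed_singleton
    exact h.cU.comp (by fun_prop) (fun s hs => ⟨hs, mem_univ _⟩)
  have hcov : ⋃ n, A n = univ := by
    rw [eq_univ_iff_forall]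
    intro s
    by_cases hs : s ∈ Ioo a b
    · have hs' := Ioo_subset_Icc_self hs
      obtain ⟨R, hR⟩ := (h.spt s hs').isCompact.isBounded.subset_closedBall (0:Space)
      obtain ⟨n, hn⟩ := exists_nat_ge R
      refine mem_iUnion.2 ⟨n, Or.inr (mem_iInter.2 fun x => ⟨hs', ?_⟩)⟩
      simp only [mem_preimage, mem_singleton_iff, h.hu]
      by_contra hne
      have := hR (subset_tsupport _ hne)
      rw [mem_closedBall_zero_iff] at this
      linarith [x.2]
    · refine mem_iUnion.2 ⟨0, Or.inl ?_⟩
      by_contra hne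
      simp only [mem_union, mem_Iic, mem_Ici, not_or, not_le] at hne
      exact hs hne
  have hd := dense_iUnion_interior_of_closed hcl hcov
  obtain ⟨s₀, hs₀, hm⟩ := hd.exists_mem_open isOpen_Ioo (nonempty_Ioo.2 h.hab)
  obtain ⟨n, hn⟩ := mem_iUnion.1 hs₀
  refine ⟨s₀, hm, n, fun x hx => ?_⟩
  have hU0 : ∀ᶠ p : TX in nhds (s₀, x), U p = 0 := by
    have h1 : ∀ᶠ s in nhds s₀, s ∈ A n ∧ s ∈ Ioo a b :=
      Filter.Eventually.and (mem_interior_iff_mem_nhds.1 hn) (isOpen_Ioo.mem_nhds hm)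
    have h2 : ∀ᶠ y in nhds x, (n:ℝ) < ‖y‖ := continuous_norm.continuousAt.eventually (lt_mem_nhds hx)
    rw [nhds_prod_eq]
    filter_upwards [h1.prod_mk h2] with p hp
    obtain ⟨⟨hp1, hp2⟩, hp3⟩ := hp
    rcases hp1 with (hp1 | hp1) | hp1
    · exact absurd hp2.1 (not_lt.2 hp1)
    · exact absurd hp2.2 (not_lt.2 hp1)
    · exact (mem_iInter.1 hp1 ⟨p.2, hp3⟩).2
  have hD0 : D (s₀, x) = 0 := by
    rw [← (h.sm.hU s₀ hm x).fderiv]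
    have : U =ᶠ[nhds (s₀, x)] fun _ => (0:ℝ) := hU0
    rw [this.fderiv_eq]
    simp
  unfold edens
  rw [hD0, hU0.self_of_nhds, Fpot_zero]
  simp

/-- unit ball energy -/
def Bl (c : ℝ) (U : TX → ℝ) (D : TX → (TX →L[ℝ] ℝ)) (s : ℝ) (x : Space) (r : ℝ) : ℝ :=
  ∫ z in Metric.closedBall (0:Space) 1, edens (Fpot c) U D (s, x + r • z)

lemma Bl_neg (s : ℝ) (x : Space) (r : ℝ) : Bl c U D s x (-r) = Bl c U D s x r := by
  unfold Bl
  rw [← integral_indicator measurableSet_closedBall, ← integral_indicator measurableSet_closedBall,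
    ← integral_neg_eq_self]
  congr 1
  ext z
  simp only [indicator, mem_closedBall_zero_iff, norm_neg, smul_neg, neg_smul, neg_neg]

lemma En_Bl (t : ℝ) (x : Space) (s : ℝ) :
    En (Fpot c) U D t x s = (t - s) ^ 3 * Bl c U D s x (t - s) := by
  unfold En Bl
  rw [integral_const_mul]

lemma Bl_nonneg (hc : 0 < c) (s : ℝ) (x : Space) (r : ℝ) : 0 ≤ Bl c U D s x r :=
  integral_nonneg fun _ => edens_nonneg hc _

lemma Bl_scale (s : ℝ) (x : Space) {r : ℝ} (hr : 0 < r) :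
    r ^ 3 * Bl c U D s x r = ∫ z in Metric.closedBall (0:Space) r,
      edens (Fpot c) U D (s, x + z) := by
  unfold Bl
  rw [Measure.setIntegral_comp_smul_of_pos (μ := (volume : Measure Space))
    (fun z => edens (Fpot c) U D (s, x + z)) (Metric.closedBall 0 1) hr, smul_unitClosedBall,
    finrank_Space, Real.norm_of_nonneg hr.le, smul_eq_mul, ← mul_assoc,
    mul_inv_cancel₀ (by positivity), one_mul]

lemma En_cont (h : Data c a b u U D D2) (t : ℝ) (x : Space) :
    ContinuousOn (En (Fpot c) U D t x) (Icc a b) := by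
  unfold En
  refine param_continuousOn volume (isCompact_closedBall 0 1) measurableSet_closedBall isCompact_Icc
    (k := fun s z => (t - s) ^ 3 * edens (Fpot c) U D (s, x + (t - s) • z)) ?_
  have ce := path_contOn _ continuous_id t x (K := Metric.closedBall (0:Space) 1) (edens_cont h)
  have : ContinuousOn (fun p : ℝ × Space => (t - p.1) ^ 3) (Icc a b ×ˢ Metric.closedBall 0 1) := by
    fun_prop
  exact this.mul ce

lemma En_anti (hc : 0 < c) (h : Data c a b u U D D2) (t : ℝ) (x : Space) :
    AntitoneOn (En (Fpot c) U D t x) (Icc a b) := by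
  have hd : ∀ s ∈ Ioo a b, _ := fun s hs => En_hasDerivAt h.sm (Fpot_deriv c) (f_cont c)
    (Fpot_contDiff c) h.heq t x hs
  refine antitoneOn_of_deriv_nonpos (convex_Icc a b) (En_cont h t x) ?_ ?_
  · rw [interior_Icc]
    exact fun s hs => (hd s hs).differentiableAt.differentiableWithinAt
  · rw [interior_Icc]
    intro s hs
    rw [(hd s hs).deriv]
    refine mul_nonpos_of_nonneg_of_nonpos (sq_nonneg _) (integral_nonpos fun w => ?_)
    refine (flux_le _ _ _ _ w).trans ?_
    have := Fpot_nonneg hc (U (s, x + (t - s) • (w:Space)))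
    simp only [Pi.zero_apply]
    linarith

/-- energy on balls is bounded by the total energy -/
lemma ball_bound (hc : 0 < c) (h : Data c a b u U D D2) {E : ℝ}
    (hE : ∀ s ∈ Icc a b, energy c u s = E) :
    0 ≤ E ∧ ∀ s ∈ Icc a b, ∀ x : Space, ∀ r : ℝ, 0 ≤ r → r ^ 3 * Bl c U D s x r ≤ E := by
  obtain ⟨s₀, hs₀, n, hn⟩ := good_time h
  have hs₀' := Ioo_subset_Icc_self hs₀
  have ce := slice_cont (edens_cont h) hs₀'
  have hi : Integrable (fun y => edens (Fpot c) U D (s₀, y)) := by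
    refine ce.integrable_of_hasCompactSupport
      (HasCompactSupport.intro (isCompact_closedBall (0:Space) n) fun x hx => hn x ?_)
    simpa using hx
  have hEE : ∫ y, edens (Fpot c) U D (s₀, y) = E := by
    have cb : Continuous (fun y => D (s₀, y) et) :=
      (slice_cont h.cD hs₀').clm_apply continuous_const
    rw [← hE s₀ hs₀', energy]
    simp only [h.dti s₀ hs₀]
    rw [← (pieces hc h hs₀' hi cb (fun y => le_rfl)).2]
    simp only [edens_eq h hs₀']
  have hE0 : 0 ≤ E := hEE ▸ integral_nonneg fun y => edens_nonneg hc _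
  have h0 : ∀ x : Space, ∀ r : ℝ, 0 ≤ r → r ^ 3 * Bl c U D s₀ x r ≤ E := by
    intro x r hr
    rcases hr.eq_or_lt with rfl | hr
    · simpa using hE0
    · rw [Bl_scale s₀ x hr, ← hEE,
        ← integral_add_left_eq_self (μ := (volume : Measure Space))
          (fun y => edens (Fpot c) U D (s₀, y)) x]
      exact setIntegral_le_integral (hi.comp_add_left x)
        (Filter.Eventually.of_forall fun y => edens_nonneg hc _)
  refine ⟨hE0, fun s hs x r hr => ?_⟩
  rcases le_total s₀ s with hle | hle
  · have := En_anti hc h (s + r) x hs₀' hs hle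
    rw [En_Bl, En_Bl] at this
    have h2 := h0 x (s + r - s₀) (by linarith)
    rw [add_sub_cancel_left] at this
    exact this.trans h2
  · have := En_anti hc h (s - r) x hs hs₀' hle
    rw [En_Bl, En_Bl] at this
    have h2 := h0 x (s₀ - s + r) (by linarith)
    rw [show s - r - s = -r by ring, show s - r - s₀ = -(s₀ - s + r) by ring, Bl_neg, Bl_neg] at this
    have e : ∀ r B : ℝ, (-r) ^ 3 * B = - (r ^ 3 * B) := fun r B => by ring
    rw [e, e] at this
    linarith

/-- no junk at admissible times -/
lemma dt_eq (hc : 0 < c) (h : Data c a b u U D D2) {E : ℝ}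
    (hE : ∀ s ∈ Icc a b, energy c u s = E) {s : ℝ} (hs : s ∈ Icc a b)
    (hcont : Continuous (dt1 u s)) (y : Space) : dt1 u s y = D (s, y) et := by
  obtain ⟨hE0, hB⟩ := ball_bound hc h hE
  have ce := slice_cont (edens_cont h) hs
  have hco : AECover (volume : Measure Space) Filter.atTop
      (fun r : ℝ => Metric.closedBall (0:Space) r) := aecover_closedBall Filter.tendsto_id
  have hbd : ∀ᶠ r : ℝ in Filter.atTop, ∫ y in Metric.closedBall (0:Space) r,
      edens (Fpot c) U D (s, y) ≤ E := by
    filter_upwards [Filter.eventually_gt_atTop 0] with r hr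
    have := hB s hs 0 r hr.le
    rw [Bl_scale s 0 hr] at this
    simpa using this
  have hi : Integrable (fun y => edens (Fpot c) U D (s, y)) :=
    hco.integrable_of_integral_bounded_of_nonneg_ae E
      (fun r => ce.continuousOn.integrableOn_compact (isCompact_closedBall 0 r))
      (Filter.Eventually.of_forall fun y => edens_nonneg hc _) hbd
  have hI : ∫ y, edens (Fpot c) U D (s, y) ≤ E :=
    le_of_tendsto (hco.integral_tendsto_of_countably_generated hi) hbd
  have hle : ∀ y, (dt1 u s y) ^ 2 ≤ (D (s, y) et) ^ 2 := by
    intro y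
    rcases h.dt s hs y with e | e
    · rw [e]; nlinarith [sq_nonneg (D (s, y) et)]
    · rw [e]
  obtain ⟨p1, p2⟩ := pieces hc h hs hi hcont hle
  have hEs := hE s hs
  rw [energy, ← p2] at hEs
  have hle2 : ∀ y, (1/2) * (dt1 u s y) ^ 2 + (1/2) * ‖gradient (u s) y‖ ^ 2 + Fpot c (u s y)
      ≤ edens (Fpot c) U D (s, y) := fun y => by
    rw [edens_eq h hs]; linarith [hle y]
  have heq : (fun y => (1/2) * (dt1 u s y) ^ 2) = fun y => (1/2) * (D (s, y) et) ^ 2 := by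
    have hz : ∫ y, (edens (Fpot c) U D (s, y) - ((1/2) * (dt1 u s y) ^ 2
        + (1/2) * ‖gradient (u s) y‖ ^ 2 + Fpot c (u s y))) = 0 := by
      refine le_antisymm ?_ (integral_nonneg fun y => sub_nonneg.2 (hle2 y))
      rw [integral_sub hi p1]
      linarith
    rw [integral_eq_zero_iff_of_nonneg (fun y => sub_nonneg.2 (hle2 y)) (hi.sub p1)] at hz
    have cb : Continuous (fun y => D (s, y) et) :=
      (slice_cont h.cD hs).clm_apply continuous_const
    refine (Continuous.ae_eq_iff_eq (volume : Measure Space) (by fun_prop)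
      ((cb.pow 2).const_mul (1/2))).1 ?_
    filter_upwards [hz] with y hy
    simp only [edens_eq h hs, Pi.zero_apply] at hy
    simp only [Pi.pow_apply]
    linarith
  have hy := congrFun heq y
  rcases h.dt s hs y with e | e
  · simp only [e] at hy
    rw [e]
    have : (D (s, y) et) ^ 2 = 0 := by linarith
    exact (pow_eq_zero_iff (by norm_num)).1 this |>.symm
  · exact e

end

lemma phi_cont {J : Set ℝ} (hJ : IsCompact J) {U : TX → ℝ} {D : TX → (TX →L[ℝ] ℝ)}
    (cU : ContinuousOn U (J ×ˢ univ)) (cD : ContinuousOn D (J ×ˢ univ)) (t : ℝ) (x : Space) :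
    ContinuousOn (phi U D t x) J := by
  have hcs : Continuous (fun w : Sph => (w:Space)) := continuous_subtype_val
  have cU := path_contOn _ hcs t x (K := univ) cU
  have cD := path_contOn _ hcs t x (K := univ) cD
  have cex : Continuous (fun p : ℝ × Sph => ex (p.2 : Space)) := by unfold ex; fun_prop
  have cDe : ContinuousOn (fun p : ℝ × Sph => D (p.1, x + (t - p.1) • (p.2:Space)) (ex p.2))
    (J ×ˢ univ) := cD.clm_apply cex.continuousOn
  have cDt : ContinuousOn (fun p : ℝ × Sph => D (p.1, x + (t - p.1) • (p.2:Space)) et)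
    (J ×ˢ univ) := cD.clm_apply continuousOn_const
  have ct : ContinuousOn (fun p : ℝ × Sph => t - p.1) (J ×ˢ univ) := by fun_prop
  unfold phi
  exact sph_continuousOn hJ (k := fun s w => U (s, x + (t - s) • (w:Space)) + (t - s) *
    (D (s, x + (t - s) • (w:Space)) (ex w) + D (s, x + (t - s) • (w:Space)) et))
    (cU.add (ct.mul (cDe.add cDt)))

lemma phi_free {v : ℝ → Space → ℝ} (hv : ContDiff ℝ (⊤ : ℕ∞) (fun p : ℝ × Space => v p.1 p.2))
    (heq : ∀ (s : ℝ) (x : Space), dt2 v s x = lap (v s) x) (t : ℝ) (x : Space) (s : ℝ) :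
    phi (fun p => v p.1 p.2) (fderiv ℝ (fun p : ℝ × Space => v p.1 p.2)) t x s
      = sg.real univ * v t x := by
  set V : TX → ℝ := fun p => v p.1 p.2 with hV
  have sm : Sm univ V (fderiv ℝ V) (fderiv ℝ (fderiv ℝ V)) :=
    sm_of isOpen_univ hv.contDiffOn (fun _ _ _ => rfl)
  have hbox : ∀ p, box (fderiv ℝ (fderiv ℝ V)) p = 0 := by
    rintro ⟨r, y⟩
    rw [sm_box sm (u := v) (fun _ _ => rfl) (mem_univ r), heq, sub_self]
  have hd : ∀ r, r ≠ t → HasDerivAt (phi V (fderiv ℝ V) t x) 0 r := by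
    intro r hr
    have := phi_hasDerivAt sm t x (mem_univ r) hr
    simpa [hbox] using this
  have hc : ContinuousOn (phi V (fderiv ℝ V) t x) (uIcc s t) :=
    phi_cont isCompact_uIcc (sm.cU.continuousOn.mono (by simp))
      (sm.cD.continuousOn.mono (by simp)) t x
  have hin : ∀ r ∈ interior (uIcc s t), r ≠ t := by
    intro r hr
    rw [uIcc, interior_Icc] at hr
    rintro rfl
    rcases le_total s r with h | h
    · rw [sup_of_le_right h] at hr; exact lt_irrefl _ hr.2
    · rw [inf_of_le_right h] at hr; exact lt_irrefl _ hr.1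
  have hdiff : DifferentiableOn ℝ (phi V (fderiv ℝ V) t x) (interior (uIcc s t)) :=
    fun r hr => (hd r (hin r hr)).differentiableAt.differentiableWithinAt
  have m1 := antitoneOn_of_deriv_nonpos (convex_uIcc s t) hc hdiff
    (fun r hr => (hd r (hin r hr)).deriv.le)
  have m2 := monotoneOn_of_deriv_nonneg (convex_uIcc s t) hc hdiff
    (fun r hr => (hd r (hin r hr)).deriv.ge)
  have e : phi V (fderiv ℝ V) t x s = phi V (fderiv ℝ V) t x t := by
    rcases le_total s t with h | h
    · exact le_antisymm (m2 left_mem_uIcc right_mem_uIcc h) (m1 left_mem_uIcc right_mem_uIcc h)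
    · exact le_antisymm (m1 right_mem_uIcc left_mem_uIcc h) (m2 right_mem_uIcc left_mem_uIcc h)
  rw [e, phi]
  simp [hV]

lemma pt_ineq {c r l G V e box fl : ℝ} (hc : 0 < c) (hr : r ≠ 0) (hl : 0 < l)
    (he : e = 1 ∨ e = -1) (hbox : box = - f c V) (hfl : fl ≤ - Fpot c V) (hG : g c V ≤ G) :
    e * (r * box) + l * (64 * kap ^ c) * (r ^ 2 * fl) - (l ^ 5)⁻¹ * G * (r ^ 4)⁻¹ ≤ 0 := by
  have hk : 0 < kap ^ c := Real.rpow_pos_of_pos (by linarith [kap_pos]) c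
  have hg := g_pos c V
  have h1 : e * (r * box) ≤ |r| * |V| ^ 5 * g c V := by
    have : |e * (r * box)| = |r| * |V| ^ 5 * g c V := by
      rw [hbox, f, abs_mul, abs_mul, abs_neg, abs_mul, abs_of_pos hg, abs_pow]
      have : |e| = 1 := by rcases he with rfl | rfl <;> simp
      rw [this]; ring
    rw [← this]; exact le_abs_self _
  have h2 := mul_le_mul_of_nonneg_right (young_aux (u := V) hr hl) hg.le
  have h3 := Fpot_lower hc V
  have h4 : l * r ^ 2 * (V ^ 6 * g c V) ≤ l * r ^ 2 * (64 * kap ^ c * Fpot c V) := by gcongr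
  have h5 : (l ^ 5)⁻¹ * (r ^ 4)⁻¹ * g c V ≤ (l ^ 5)⁻¹ * (r ^ 4)⁻¹ * G := by
    have : 0 < r ^ 4 := by positivity
    gcongr
  have h6 : l * (64 * kap ^ c) * (r ^ 2 * fl) ≤ l * (64 * kap ^ c) * (r ^ 2 * (- Fpot c V)) := by
    gcongr
  nlinarith

section
variable {c a b : ℝ} {u : ℝ → Space → ℝ} {U : TX → ℝ} {D : TX → (TX →L[ℝ] ℝ)}
    {D2 : TX → (TX →L[ℝ] (TX →L[ℝ] ℝ))}

lemma H_anti (hc : 0 < c) (h : Data c a b u U D D2) {G l e t T1 T2 : ℝ} (hl : 0 < l)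
    (he : e = 1 ∨ e = -1) (hG : ∀ s ∈ Icc a b, ∀ y, g c (u s y) ≤ G)
    (hsub : Icc T1 T2 ⊆ Icc a b) (hT : T1 ≤ T2) (ht : t ∉ Icc T1 T2) (x : Space) :
    AntitoneOn (fun s => e * phi U D t x s + l * (64 * kap ^ c) * En (Fpot c) U D t x s
      - (l ^ 5)⁻¹ * G * sg.real univ * (3 * (t - s) ^ 3)⁻¹) (Icc T1 T2) := by
  have hne : ∀ s ∈ Icc T1 T2, t - s ≠ 0 := by
    intro s hs h0
    have : t = s := by linarith
    exact ht (this ▸ hs)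
  have hsub2 : Icc T1 T2 ×ˢ (univ : Set Space) ⊆ Icc a b ×ˢ univ := prod_mono hsub subset_rfl
  have hsub3 : Ioo T1 T2 ⊆ Ioo a b := by
    have h1 := hsub (left_mem_Icc.2 hT)
    have h2 := hsub (right_mem_Icc.2 hT)
    exact Ioo_subset_Ioo h1.1 h2.2
  have hd : ∀ s ∈ Ioo T1 T2, HasDerivAt
      (fun s => e * phi U D t x s + l * (64 * kap ^ c) * En (Fpot c) U D t x s
      - (l ^ 5)⁻¹ * G * sg.real univ * (3 * (t - s) ^ 3)⁻¹)
      (e * ((t - s) * ∫ w : Sph, box D2 (s, x + (t - s) • (w:Space)) ∂sg)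
      + l * (64 * kap ^ c) * ((t - s) ^ 2 * ∫ w : Sph,
      (D (s, x + (t - s) • (w:Space)) et * D (s, x + (t - s) • (w:Space)) (ex w)
        - edens (Fpot c) U D (s, x + (t - s) • (w:Space))) ∂sg)
      - (l ^ 5)⁻¹ * G * sg.real univ * ((t - s) ^ 4)⁻¹) s := by
    intro s hs
    have hs0 := hne s (Ioo_subset_Icc_self hs)
    have d1 := phi_hasDerivAt h.sm t x (hsub3 hs) (fun e => hs0 (by rw [e]; ring))
    have d2 := En_hasDerivAt h.sm (Fpot_deriv c) (f_cont c) (Fpot_contDiff c) h.heq t x (hsub3 hs)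
    have d3 : HasDerivAt (fun s : ℝ => (3 * (t - s) ^ 3)⁻¹) (((t - s) ^ 4)⁻¹) s := by
      have := ((((hasDerivAt_id' s).const_sub t).fun_pow 3).const_mul 3).fun_inv
        (by positivity : 3 * (t - s) ^ 3 ≠ 0)
      refine this.congr_deriv ?_
      simp only [Nat.cast_ofNat]
      field_simp
    exact ((d1.const_mul e).fun_add (d2.const_mul _)).fun_sub (d3.const_mul _)
  refine antitoneOn_of_deriv_nonpos (convex_Icc _ _) ?_ ?_ ?_
  · have c3 : ContinuousOn (fun s : ℝ => (3 * (t - s) ^ 3)⁻¹) (Icc T1 T2) := by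
      refine ContinuousOn.inv₀ (by fun_prop) (fun s hs => ?_)
      have := hne s hs
      positivity
    exact ((continuousOn_const.mul (phi_cont isCompact_Icc (h.cU.mono hsub2) (h.cD.mono hsub2) t x)).add
      (continuousOn_const.mul ((En_cont h t x).mono hsub))).sub (continuousOn_const.mul c3)
  · rw [interior_Icc]
    exact fun s hs => (hd s hs).differentiableAt.differentiableWithinAt
  · rw [interior_Icc]
    intro s hs
    rw [(hd s hs).deriv]
    have hs' : s ∈ Icc a b := hsub (Ioo_subset_Icc_self hs)
    have hp : Continuous (fun w : Sph => x + (t - s) • (w:Space)) := by fun_prop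
    have cD : Continuous (fun w : Sph => D (s, x + (t - s) • (w:Space))) :=
      (slice_cont h.cD hs').comp hp
    have cex : Continuous (fun w : Sph => ex (w : Space)) := by unfold ex; fun_prop
    have ce : Continuous (fun w : Sph => edens (Fpot c) U D (s, x + (t - s) • (w:Space))) :=
      (slice_cont (edens_cont h) hs').comp hp
    have cb : Continuous (fun w : Sph => box D2 (s, x + (t - s) • (w:Space))) := by
      simp only [h.heq s (hsub3 hs)]
      exact ((f_cont c).comp ((slice_cont h.cU hs').comp hp)).neg
    have i1 := sph_integrable cb
    have i2 : Integrable (fun w : Sph => D (s, x + (t - s) • (w:Space)) et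
        * D (s, x + (t - s) • (w:Space)) (ex w)
        - edens (Fpot c) U D (s, x + (t - s) • (w:Space))) sg := sph_integrable (((cD.clm_apply (continuous_const (y := et))).mul
      (cD.clm_apply cex)).sub ce)
    have i12 : Integrable (fun w : Sph => e * ((t - s) * box D2 (s, x + (t - s) • (w:Space)))
        + l * (64 * kap ^ c) * ((t - s) ^ 2 * (D (s, x + (t - s) • (w:Space)) et
        * D (s, x + (t - s) • (w:Space)) (ex w)
        - edens (Fpot c) U D (s, x + (t - s) • (w:Space))))) sg :=
      ((i1.const_mul _).const_mul _).add ((i2.const_mul _).const_mul _)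
    have e3 : (l ^ 5)⁻¹ * G * sg.real univ * ((t - s) ^ 4)⁻¹
        = ∫ w : Sph, (l ^ 5)⁻¹ * G * ((t - s) ^ 4)⁻¹ ∂sg := by
      rw [integral_const, smul_eq_mul]; ring
    rw [e3, ← integral_const_mul (t - s), ← integral_const_mul e, ← integral_const_mul ((t - s) ^ 2),
      ← integral_const_mul (l * (64 * kap ^ c)),
      ← integral_add ((i1.const_mul _).const_mul _) ((i2.const_mul _).const_mul _),
      ← integral_sub i12 (integrable_const _)]
    refine integral_nonpos fun w => ?_
    simp only [Pi.zero_apply]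
    exact pt_ineq hc (hne s (Ioo_subset_Icc_self hs)) hl he (h.heq s (hsub3 hs) _)
      (flux_le _ _ _ _ w) (by rw [h.hu]; exact hG s hs' _)

lemma core (hc : 0 < c) (h : Data c a b u U D D2) {E G l t T1 T2 d : ℝ} (hl : 0 < l)
    (hE : ∀ s ∈ Icc a b, energy c u s = E) (hG : ∀ s ∈ Icc a b, ∀ y, g c (u s y) ≤ G)
    (hsub : Icc T1 T2 ⊆ Icc a b) (hT : T1 ≤ T2) (hd : 0 < d) (ht : t = T2 + d ∨ t = T1 - d)
    (x : Space) :
    |phi U D t x T2 - phi U D t x T1| ≤ l * (64 * kap ^ c * E)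
      + (l ^ 5)⁻¹ * (G * sg.real univ * (3 * d ^ 3)⁻¹) := by
  obtain ⟨hE0, hB⟩ := ball_bound hc h hE
  have hk : 0 < kap ^ c := Real.rpow_pos_of_pos (by linarith [kap_pos]) c
  have m1 := hsub (left_mem_Icc.2 hT)
  have m2 := hsub (right_mem_Icc.2 hT)
  have hG0 : 0 < G := (g_pos c _).trans_le (hG T1 m1 0)
  have hsg : 0 < sg.real univ := by linarith [sg_ge]
  have ht' : t ∉ Icc T1 T2 := by
    rintro ⟨h1, h2⟩
    rcases ht with h | h <;> linarith
  have hEn : En (Fpot c) U D t x T1 - En (Fpot c) U D t x T2 ≤ E := by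
    rw [En_Bl, En_Bl]
    rcases ht with rfl | rfl
    · have h1 := hB T1 m1 x (T2 + d - T1) (by linarith)
      have h2 := Bl_nonneg (U := U) (D := D) hc T2 x (T2 + d - T2)
      have h3 : 0 ≤ (T2 + d - T2) ^ 3 := by rw [add_sub_cancel_left]; positivity
      nlinarith
    · have h1 := hB T2 m2 x (T2 - T1 + d) (by linarith)
      have h2 := Bl_nonneg (U := U) (D := D) hc T1 x (-d)
      rw [show T1 - d - T1 = -d by ring, show T1 - d - T2 = -(T2 - T1 + d) by ring,
        Bl_neg (r := T2 - T1 + d)]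
      have h3 : 0 ≤ d ^ 3 * Bl c U D T1 x (-d) := by positivity
      have e : ∀ r B : ℝ, (-r) ^ 3 * B = - (r ^ 3 * B) := fun r B => by ring
      rw [e, e]
      linarith
  have hin : (3 * (t - T2) ^ 3)⁻¹ - (3 * (t - T1) ^ 3)⁻¹ ≤ (3 * d ^ 3)⁻¹ := by
    have e : ∀ r : ℝ, (3 * (-r) ^ 3)⁻¹ = - (3 * r ^ 3)⁻¹ := fun r => by
      rw [← inv_neg]; congr 1; ring
    rcases ht with rfl | rfl
    · rw [add_sub_cancel_left]
      have : 0 ≤ (3 * (T2 + d - T1) ^ 3)⁻¹ := by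
        have : 0 < T2 + d - T1 := by linarith
        positivity
      linarith
    · rw [show T1 - d - T1 = -d by ring, show T1 - d - T2 = -(T2 - T1 + d) by ring, e, e]
      have : 0 ≤ (3 * (T2 - T1 + d) ^ 3)⁻¹ := by
        have : 0 < T2 - T1 + d := by linarith
        positivity
      linarith
  have key : ∀ e : ℝ, e = 1 ∨ e = -1 → e * (phi U D t x T2 - phi U D t x T1)
      ≤ l * (64 * kap ^ c * E) + (l ^ 5)⁻¹ * (G * sg.real univ * (3 * d ^ 3)⁻¹) := by
    intro e he
    have := H_anti hc h hl he hG hsub hT ht' x (left_mem_Icc.2 hT) (right_mem_Icc.2 hT) hT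
    simp only at this
    have a1 := mul_le_mul_of_nonneg_left hEn (by positivity : 0 ≤ l * (64 * kap ^ c))
    have a2 := mul_le_mul_of_nonneg_left hin
      (by positivity : 0 ≤ (l ^ 5)⁻¹ * G * sg.real univ)
    nlinarith
  rw [abs_le]
  constructor
  · have := key (-1) (Or.inr rfl)
    linarith
  · have := key 1 (Or.inl rfl)
    linarith

end

lemma phi_match {c a b : ℝ} {u : ℝ → Space → ℝ} {U : TX → ℝ} {D : TX → (TX →L[ℝ] ℝ)}
    {D2 : TX → (TX →L[ℝ] (TX →L[ℝ] ℝ))} (hc : 0 < c) (h : Data c a b u U D D2) {E : ℝ}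
    (hE : ∀ s ∈ Icc a b, energy c u s = E) {T : ℝ} (hT : T ∈ Icc a b) {v : ℝ → Space → ℝ}
    (hv : ContDiff ℝ (⊤ : ℕ∞) (fun p : ℝ × Space => v p.1 p.2))
    (h0 : ∀ x, v T x = u T x) (h1 : ∀ x, dt1 v T x = dt1 u T x) (t : ℝ) (x : Space) :
    phi (fun p => v p.1 p.2) (fderiv ℝ (fun p : ℝ × Space => v p.1 p.2)) t x T
      = phi U D t x T := by
  set V : TX → ℝ := fun p => v p.1 p.2 with hV
  have sm : Sm univ V (fderiv ℝ V) (fderiv ℝ (fderiv ℝ V)) :=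
    sm_of isOpen_univ hv.contDiffOn (fun _ _ _ => rfl)
  have hvu : v T = u T := funext h0
  have e1 : ∀ y, fderiv ℝ V (T, y) et = dt1 u T y := fun y => by
    rw [← h1, sm_dt1 sm (u := v) (fun _ _ => rfl) (mem_univ T)]
  have hcont : Continuous (dt1 u T) := by
    have : dt1 u T = fun y => fderiv ℝ V (T, y) et := funext fun y => (e1 y).symm
    rw [this]
    exact (slice_cont sm.cD.continuousOn (mem_univ T)).clm_apply continuous_const
  have e2 : ∀ y w, fderiv ℝ V (T, y) (ex w) = D (T, y) (ex w) := fun y w => by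
    rw [← sm_fx sm (u := v) (fun _ _ => rfl) (mem_univ T), hvu, h.fx T hT]
  have e3 : ∀ y, V (T, y) = U (T, y) := fun y => by rw [h.hu]; exact h0 y
  unfold phi
  simp only [e1, e2, e3, dt_eq hc h hE hT hcont]

lemma fin_aux {σ A E K k gm d x : ℝ} (hσ : 1 ≤ σ) (hE : 0 ≤ E) (hK : 0 < K) (hk : 0 < k)
    (hg : 0 < gm) (hx : 0 < x) (hxd : x ≤ d)
    (h : σ * |A| ≤ 2 * ((K * E) ^ ((5:ℝ)/6) * (k * gm * σ * (3 * d ^ 3)⁻¹) ^ ((1:ℝ)/6))) :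
    |A| ≤ 2 * (K ^ ((5:ℝ)/6) * (k * σ) ^ ((1:ℝ)/6)) * E ^ ((5:ℝ)/6) * gm ^ ((1:ℝ)/6)
      / x ^ ((1:ℝ)/2) := by
  have h1 : |A| ≤ σ * |A| := le_mul_of_one_le_left (abs_nonneg _) hσ
  refine (h1.trans h).trans ?_
  have e1 : k * gm * σ * (3 * d ^ 3)⁻¹ ≤ (k * σ) * gm * (x ^ 3)⁻¹ := by
    have : (3 * d ^ 3)⁻¹ ≤ (x ^ 3)⁻¹ := by
      apply inv_anti₀ (by positivity)
      have : x ^ 3 ≤ d ^ 3 := by gcongr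
      have : 0 < x ^ 3 := by positivity
      linarith
    calc k * gm * σ * (3 * d ^ 3)⁻¹ ≤ k * gm * σ * (x ^ 3)⁻¹ := by gcongr
      _ = _ := by ring
  have hd : 0 < d := hx.trans_le hxd
  have e2 : (k * gm * σ * (3 * d ^ 3)⁻¹) ^ ((1:ℝ)/6)
      ≤ (k * σ) ^ ((1:ℝ)/6) * gm ^ ((1:ℝ)/6) * (x ^ ((1:ℝ)/2))⁻¹ := by
    refine (Real.rpow_le_rpow (by positivity) e1 (by norm_num)).trans_eq ?_
    rw [Real.mul_rpow (by positivity) (by positivity), Real.mul_rpow (by positivity) hg.le,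
      Real.inv_rpow (by positivity), ← Real.rpow_natCast, ← Real.rpow_mul hx.le]
    norm_num
  rw [Real.mul_rpow hK.le hE, div_eq_mul_inv]
  calc 2 * (K ^ ((5:ℝ)/6) * E ^ ((5:ℝ)/6) * (k * gm * σ * (3 * d ^ 3)⁻¹) ^ ((1:ℝ)/6))
      ≤ 2 * (K ^ ((5:ℝ)/6) * E ^ ((5:ℝ)/6)
        * ((k * σ) ^ ((1:ℝ)/6) * gm ^ ((1:ℝ)/6) * (x ^ ((1:ℝ)/2))⁻¹)) := by gcongr
    _ = _ := by ring

/-- Asymptotic stability of the linear evolutions. -/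
theorem asymptotic_stability (c : ℝ) (hc : 0 < c) (hc' : c < 8 / 225) :
    ∃ C > (0:ℝ),
      ∀ (t₁ t₂ t₁' t₂' t : ℝ) (u v₁ v₂ : ℝ → Space → ℝ) (E M : ℝ),
        t₁ ≤ t₂ →
        IsClassicalSol c (Set.Icc t₁ t₂) u →
        (∀ s ∈ Set.Icc t₁ t₂, energy c u s = E) →
        (∀ s ∈ Set.Icc t₁ t₂, H2tildeNorm (u s) ≤ M) →
        t₁' ≤ t₂' → Set.Icc t₁' t₂' ⊆ Set.Icc t₁ t₂ →
        t ∈ Set.Icc t₁ t₂ \ Set.Icc t₁' t₂' →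
        ContDiff ℝ (⊤ : ℕ∞) (fun p : ℝ × Space => v₁ p.1 p.2) →
        ContDiff ℝ (⊤ : ℕ∞) (fun p : ℝ × Space => v₂ p.1 p.2) →
        (∀ (s : ℝ) (x : Space), dt2 v₁ s x = lap (v₁ s) x) →
        (∀ (s : ℝ) (x : Space), dt2 v₂ s x = lap (v₂ s) x) →
        (∀ x, v₁ t₁' x = u t₁' x) → (∀ x, dt1 v₁ t₁' x = dt1 u t₁' x) →
        (∀ x, v₂ t₂' x = u t₂' x) → (∀ x, dt1 v₂ t₂' x = dt1 u t₂' x) →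
        ∀ x : Space,
          |v₂ t x - v₁ t x|
            ≤ C * E ^ ((5:ℝ)/6) * (g c M) ^ ((1:ℝ)/6)
                / (Metric.infDist t (Set.Icc t₁' t₂')) ^ ((1:ℝ)/2) := by
  have hk : 0 < kap ^ c := Real.rpow_pos_of_pos (by linarith [kap_pos]) c
  have hs := sg_ge
  refine ⟨2 * ((64 * kap ^ c) ^ ((5:ℝ)/6) * (kap ^ c * sg.real univ) ^ ((1:ℝ)/6)), by positivity, ?_⟩
  intro t₁ t₂ T1 T2 t u v₁ v₂ E M h12 hu hE hM hT hsub ht hv₁ hv₂ hf₁ hf₂ h1 h1' h2 h2' x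
  have m1 := hsub (left_mem_Icc.2 hT)
  have m2 := hsub (right_mem_Icc.2 hT)
  have hlt : t₁ < t₂ := by
    refine lt_of_le_of_ne h12 ?_
    rintro rfl
    have := ht.1
    rw [Icc_self, mem_singleton_iff] at m1 m2 this
    apply ht.2
    rw [m1, m2, this]
    simp
  obtain ⟨U, D, D2, h⟩ := data_of hlt hu
  have hG : ∀ s ∈ Icc t₁ t₂, ∀ y, g c (u s y) ≤ kap ^ c * g c M := by
    intro s hs y
    have hb := sobolev (h.cs s hs) (h.spt s hs) (hM s hs) y
    apply g_le hc
    have h3 : (u s y) ^ 2 ≤ (1 + M ^ 2) ^ 2 := by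
      rw [← sq_abs]
      have := abs_nonneg (u s y)
      gcongr
    nlinarith [sq_nonneg M]
  have hx : 0 < Metric.infDist t (Icc T1 T2) :=
    (isClosed_Icc.notMem_iff_infDist_pos ⟨T1, left_mem_Icc.2 hT⟩).1 ht.2
  obtain ⟨d, hxd, htd⟩ : ∃ d, Metric.infDist t (Icc T1 T2) ≤ d ∧ (t = T2 + d ∨ t = T1 - d) := by
    rcases lt_or_ge T2 t with hh | hh
    · refine ⟨t - T2, ?_, Or.inl (by ring)⟩
      have := Metric.infDist_le_dist_of_mem (x := t) (right_mem_Icc.2 hT)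
      rwa [Real.dist_eq, abs_of_pos (by linarith)] at this
    · have hh2 : t < T1 := by
        by_contra hcon
        exact ht.2 ⟨not_lt.1 hcon, hh⟩
      refine ⟨T1 - t, ?_, Or.inr (by ring)⟩
      have := Metric.infDist_le_dist_of_mem (x := t) (left_mem_Icc.2 hT)
      rwa [Real.dist_eq, abs_of_neg (by linarith), neg_sub] at this
  have hd : 0 < d := hx.trans_le hxd
  obtain ⟨hE0, -⟩ := ball_bound hc h hE
  have p1 := phi_match hc h hE m1 hv₁ h1 h1' t x
  have p2 := phi_match hc h hE m2 hv₂ h2 h2' t x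
  rw [phi_free hv₁ hf₁] at p1
  rw [phi_free hv₂ hf₂] at p2
  have hg := g_pos c M
  refine fin_aux (d := d) (by linarith) hE0 (by positivity) hk hg hx hxd ?_
  refine opt_aux (by positivity) (by positivity) ?_
  intro l hl
  have := core hc h hl hE hG hsub hT hd htd x
  rw [← p1, ← p2, ← mul_sub, abs_mul, abs_of_pos (by linarith : 0 < sg.real univ)] at this
  exact this
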